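/- arXiv:2201.03695 — 6 statements merged into one kernel-verified Lean document; each statement's English description precedes it below -/
import Mathlib

section
/- Let G be a finite group, P a finite G-poset, and K = K(P) the order complex of P. If P is G-connected, then the geometric realization |K| is G-connected. -/
/-! ### Module A: equivariant TC / CC / LS for topological G-spaces -/

/-- The zigzag order `0 < 1 > 2 < 3 > ⋯` on natural numbers. -/
def zigzagLE (i j : ℕ) : Prop := i = j ∨ (i % 2 = 0 ∧ (j = i + 1 ∨ i = j + 1))

/-- The combinatorial interval `J m = {0, 1, …, m}`. -/
def J (m : ℕ) : Type := Fin (m + 1)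

namespace J

/-- The underlying natural number of a point of `J m`. -/
def val {m : ℕ} (i : J m) : ℕ := Fin.val i

/-- The initial point `0` of the combinatorial interval. -/
def zero (m : ℕ) : J m := (0 : Fin (m + 1))

/-- The final point `m` of the combinatorial interval. -/
def last (m : ℕ) : J m := Fin.last m

/-- The topology on `J m` whose open sets are the down-closed sets for the zigzag order. -/
instance (m : ℕ) : TopologicalSpace (J m) where
  IsOpen U := ∀ ⦃a⦄, a ∈ U → ∀ ⦃b⦄, zigzagLE (J.val b) (J.val a) → b ∈ U
  isOpen_univ := fun a _ b _ => Set.mem_univ b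
  isOpen_inter := fun s t hs ht a ha b hba => ⟨hs ha.1 hba, ht ha.2 hba⟩
  isOpen_sUnion := fun S hS a ha b hba => by
    obtain ⟨t, htS, hat⟩ := ha
    exact ⟨t, htS, hS t htS hat hba⟩

end J

section Equivariant

variable (G : Type*) [Group G]

/-- A set is `G`-invariant if it is stable under the action of every group element. -/
def GInvariant {α : Type*} [SMul G α] (U : Set α) : Prop :=
  ∀ g : G, ∀ x ∈ U, g • x ∈ U

variable (X : Type*) [TopologicalSpace X] [MulAction G X]

/-- `U ⊆ X × X` admits a continuous equivariant section of the free path fibration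
`π : X^I → X × X`, `α ↦ (α 0, α 1)`. -/
def EqNavigable (U : Set (X × X)) : Prop :=
  ∃ s : U → C(unitInterval, X), Continuous s ∧
    (∀ u : U, s u 0 = (u : X × X).1 ∧ s u 1 = (u : X × X).2) ∧
    (∀ (g : G) (u : U) (h : g • (u : X × X) ∈ U) (t : unitInterval),
      s ⟨g • (u : X × X), h⟩ t = g • s u t)

/-- The equivariant topological complexity: the least `k` such that `X × X` admits a cover by
`k` open invariant sets, each admitting a continuous equivariant section of the free path
fibration; `⊤` if there is no such cover. -/
noncomputable def eqTC : ℕ∞ :=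
  sInf {k : ℕ∞ | ∃ n : ℕ, k = n ∧ ∃ U : Fin n → Set (X × X),
    (∀ i, IsOpen (U i)) ∧ (∀ i, GInvariant G (U i)) ∧ (⋃ i, U i) = Set.univ ∧
    ∀ i, EqNavigable G X (U i)}

/-- `U ⊆ X × X` admits a continuous equivariant section of the combinatorial path fibration
`q_m : X^{J_m} → X × X`, `β ↦ (β 0, β m)`. -/
def EqNavigableJ (m : ℕ) (U : Set (X × X)) : Prop :=
  ∃ s : U → C(J m, X), Continuous s ∧
    (∀ u : U, s u (J.zero m) = (u : X × X).1 ∧ s u (J.last m) = (u : X × X).2) ∧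
    (∀ (g : G) (u : U) (h : g • (u : X × X) ∈ U) (t : J m),
      s ⟨g • (u : X × X), h⟩ t = g • s u t)

/-- The equivariant combinatorial complexity with paths of length `m`: the least `k` such that
`X × X` admits a cover by `k` open invariant sets, each admitting a continuous equivariant
section of the combinatorial path fibration `q_m`; `⊤` if there is no such cover. -/
noncomputable def eqCCm (m : ℕ) : ℕ∞ :=
  sInf {k : ℕ∞ | ∃ n : ℕ, k = n ∧ ∃ U : Fin n → Set (X × X),
    (∀ i, IsOpen (U i)) ∧ (∀ i, GInvariant G (U i)) ∧ (⋃ i, U i) = Set.univ ∧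
    ∀ i, EqNavigableJ G X m (U i)}

/-- The equivariant combinatorial complexity: the minimum over all `m ≥ 1` of `eqCCm`. -/
noncomputable def eqCC : ℕ∞ := ⨅ m : ℕ, eqCCm G X (m + 1)

/-- `U ⊆ X` is `G`-categorical for the orbit of `x₀`: the inclusion of `U` into `X` is
`G`-homotopic to a map taking values in the orbit of `x₀`. -/
def GCategoricalAt (U : Set X) (x₀ : X) : Prop :=
  ∃ F : U × unitInterval → X, Continuous F ∧
    (∀ u : U, F (u, 0) = (u : X)) ∧
    (∀ (g : G) (u : U) (h : g • (u : X) ∈ U) (t : unitInterval),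
      F (⟨g • (u : X), h⟩, t) = g • F (u, t)) ∧
    (∀ u : U, F (u, 1) ∈ MulAction.orbit G x₀)

/-- `U ⊆ X` is `G`-categorical: the inclusion of `U` into `X` is `G`-homotopic to a map taking
values in a single orbit. -/
def GCategorical (U : Set X) : Prop :=
  ∃ x₀ : X, GCategoricalAt G X U x₀

/-- The equivariant Lusternik–Schnirelmann category: the least `k` such that `X` is covered by
`k` open invariant `G`-categorical sets; `⊤` if there is no such cover. -/
noncomputable def eqLS : ℕ∞ :=
  sInf {k : ℕ∞ | ∃ n : ℕ, k = n ∧ ∃ U : Fin n → Set X,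
    (∀ i, IsOpen (U i)) ∧ (∀ i, GInvariant G (U i)) ∧ (⋃ i, U i) = Set.univ ∧
    ∀ i, GCategorical G X (U i)}

end Equivariant
/-! ### Module C: ordered G-simplicial complexes and their geometric realizations -/

/-- An ordered `G`-simplicial complex: a finite abstract simplicial complex whose vertex set
carries a partial order in which every simplex is totally ordered, together with an action of
`G` on the vertices by monotone simplicial maps. -/
structure GOSC (G : Type) [Group G] : Type 1 where
  /-- the vertex set -/
  V : Type
  [fin : Fintype V]
  [dec : DecidableEq V]
  [po : PartialOrder V]
  /-- the set of simplices -/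
  faces : Set (Finset V)
  singleton_mem : ∀ v : V, {v} ∈ faces
  nonempty_of_mem : ∀ s ∈ faces, s.Nonempty
  down_closed : ∀ s ∈ faces, ∀ t ⊆ s, t.Nonempty → t ∈ faces
  face_chain : ∀ s ∈ faces, ∀ x ∈ s, ∀ y ∈ s, x ≤ y ∨ y ≤ x
  /-- the action of `G` on vertices -/
  smul : G → V → V
  smul_one : ∀ v, smul 1 v = v
  smul_mul : ∀ g h v, smul (g * h) v = smul g (smul h v)
  smul_mono : ∀ g : G, ∀ x y : V, x ≤ y → smul g x ≤ smul g y
  smul_faces : ∀ g : G, ∀ s ∈ faces, s.image (smul g) ∈ faces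

attribute [instance] GOSC.fin GOSC.dec GOSC.po

namespace GOSC

variable {G : Type} [Group G]

/-- The underlying set of the geometric realization `|K|`: formal convex combinations of
vertices whose support is a simplex of `K`. -/
def realSet (K : GOSC G) : Set (K.V → ℝ) :=
  {f | (∀ v, 0 ≤ f v) ∧ (∑ v, f v) = 1 ∧ ∃ s ∈ K.faces, ∀ v, f v ≠ 0 → v ∈ s}

/-- The geometric realization `|K|` of an ordered `G`-simplicial complex, topologized as a
subspace of Euclidean space `K.V → ℝ`. -/
def Real (K : GOSC G) : Type := {f : K.V → ℝ // f ∈ K.realSet}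

instance (K : GOSC G) : TopologicalSpace K.Real :=
  inferInstanceAs (TopologicalSpace {f : K.V → ℝ // f ∈ K.realSet})

/-- Each `g : G` acts on `K.V` by an order isomorphism. -/
def permOf (K : GOSC G) (g : G) : Equiv K.V K.V where
  toFun := K.smul g
  invFun := K.smul g⁻¹
  left_inv := fun v => by
    rw [← K.smul_mul, inv_mul_cancel, K.smul_one]
  right_inv := fun v => by
    rw [← K.smul_mul, mul_inv_cancel, K.smul_one]

/-- The action of `G` on the geometric realization, by affine extension:
`(g • f) v = f (g⁻¹ • v)`. -/
instance (K : GOSC G) : SMul G K.Real where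
  smul g f := ⟨fun v => f.val (K.smul g⁻¹ v), by
    obtain ⟨hnn, hsum, s, hs, hsupp⟩ := f.prop
    refine ⟨fun v => hnn _, ?_, s.image (K.smul g), K.smul_faces g s hs, ?_⟩
    · rw [show (∑ v, f.val (K.smul g⁻¹ v)) = ∑ v, f.val (K.permOf g⁻¹ v) from rfl,
        Equiv.sum_comp (K.permOf g⁻¹) f.val]
      exact hsum
    · intro v hv
      have : K.smul g⁻¹ v ∈ s := hsupp _ hv
      refine Finset.mem_image.mpr ⟨K.smul g⁻¹ v, this, ?_⟩
      rw [← K.smul_mul, mul_inv_cancel, K.smul_one]⟩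

lemma smul_apply (K : GOSC G) (g : G) (f : K.Real) (v : K.V) :
    (g • f).val v = f.val (K.smul g⁻¹ v) := rfl

instance (K : GOSC G) : MulAction G K.Real where
  one_smul f := by
    apply Subtype.ext
    funext v
    rw [smul_apply, inv_one, K.smul_one]
  mul_smul g h f := by
    apply Subtype.ext
    funext v
    rw [smul_apply, smul_apply, smul_apply, mul_inv_rev, K.smul_mul]

end GOSC
/-! ### Order complexes of finite G-posets -/

/-- The order complex `K(P)` of a finite `G`-poset `P` (a finite poset with `G` acting by
order-preserving maps): the ordered `G`-simplicial complex whose vertices are the elements of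
`P` and whose simplices are the nonempty totally ordered subsets (chains) of `P`. -/
noncomputable def orderComplexG (G : Type) [Group G] (P : Type) [Fintype P] [PartialOrder P]
    [MulAction G P] (hmono : ∀ g : G, Monotone (fun p : P => g • p)) : GOSC G :=
  letI : DecidableEq P := Classical.decEq P
  { V := P
    faces := {s | s.Nonempty ∧ ∀ x ∈ s, ∀ y ∈ s, x ≤ y ∨ y ≤ x}
    singleton_mem := fun v => ⟨Finset.singleton_nonempty v, by
      intro x hx y hy
      rw [Finset.mem_singleton] at hx hy
      subst hx; subst hy; exact Or.inl le_rfl⟩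
    nonempty_of_mem := fun s hs => hs.1
    down_closed := fun s hs t hts htne => ⟨htne, fun x hx y hy => hs.2 x (hts hx) y (hts hy)⟩
    face_chain := fun s hs => hs.2
    smul := fun g p => g • p
    smul_one := fun p => one_smul G p
    smul_mul := fun g h p => mul_smul g h p
    smul_mono := fun g x y hxy => hmono g hxy
    smul_faces := fun g s hs => ⟨hs.1.image _, by
      intro x hx y hy
      rcases Finset.mem_image.mp hx with ⟨a, ha, rfl⟩
      rcases Finset.mem_image.mp hy with ⟨b, hb, rfl⟩
      rcases hs.2 a ha b hb with h | h
      · exact Or.inl (hmono g h)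
      · exact Or.inr (hmono g h)⟩ }

namespace GOSC

variable {G : Type} [Group G]

/-- The vertex `x`, as a point of the geometric realization. -/
noncomputable def vertexPoint (K : GOSC G) (x : K.V) : K.Real :=
  ⟨fun v => if v = x then 1 else 0, by
    refine ⟨fun v => by positivity, by simp, {x}, K.singleton_mem x, ?_⟩
    intro v hv
    rw [Finset.mem_singleton]
    by_contra h
    exact hv (if_neg h)⟩

/-- The open star of a vertex `x` in `|K|`: the union of the open simplices `σ°` over all
simplices `σ` containing `x`; equivalently, the set of points whose barycentric coordinate
at `x` is nonzero. -/
def star (K : GOSC G) (x : K.V) : Set K.Real :=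
  {f | f.val x ≠ 0}

/-- The saturation `G · star(x)` of the open star of a vertex. -/
def gStar (K : GOSC G) (x : K.V) : Set K.Real :=
  {h | ∃ g : G, ∃ f ∈ K.star x, h = g • f}

/-- The geometric realization `|K|` is `G`-connected: for every subgroup `H ≤ G`, the
fixed-point set `|K|^H` is path-connected. -/
def RealGConnected (K : GOSC G) : Prop :=
  ∀ H : Subgroup G, ∀ a ∈ {y : K.Real | ∀ h ∈ H, h • y = y},
    ∀ b ∈ {y : K.Real | ∀ h ∈ H, h • y = y},
      JoinedIn {y : K.Real | ∀ h ∈ H, h • y = y} a b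

end GOSC

/-- A zigzag of order relations between `x` and `y` staying inside the set `S`. -/
def ZigzagIn {P : Type*} [PartialOrder P] (S : Set P) (x y : P) : Prop :=
  Relation.ReflTransGen (fun a b => a ∈ S ∧ b ∈ S ∧ (a ≤ b ∨ b ≤ a)) x y

/-- A finite `G`-poset `P` is `G`-connected: for every subgroup `H ≤ G`, the fixed-point set
`P^H` is order-connected (any two of its points are joined by a zigzag of order relations in
`P^H`; equivalently, `P^H` with its down-set topology is path-connected). -/
def PosetGConnected (G P : Type*) [Group G] [PartialOrder P] [MulAction G P] : Prop :=
  ∀ H : Subgroup G, ∀ x ∈ {p : P | ∀ h ∈ H, h • p = p}, ∀ y ∈ {p : P | ∀ h ∈ H, h • p = p},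
    ZigzagIn {p : P | ∀ h ∈ H, h • p = p} x y

/-! A point of `|K|` fixed by `g` has a carrier invariant under `g`. The carrier is a chain and `g`
acts on it by a monotone permutation of a finite set, so `g` fixes each of its vertices. Hence a
point of `|K|^H` can be pushed inside its closed carrier to an `H`-fixed vertex, the segment staying
in `|K|^H`; likewise two `H`-fixed vertices of a common simplex are joined by the edge between them,
so zigzags in `P^H` become edge paths in `|K|^H`. -/

section PeriodicPoint

open Function

lemma isFixedPt_of_monotone_of_mem_periodicPts {α : Type*} [PartialOrder α] {f : α → α}
    (hf : Monotone f) {x : α} (hx : x ∈ periodicPts f) (hcomp : x ≤ f x ∨ f x ≤ x) :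
    IsFixedPt f x := by
  obtain ⟨n, hn, hper⟩ := hx
  rcases hcomp with hle | hge
  · have hfx : f^[1] x ≤ f^[n] x := hf.monotone_iterate_of_le_map hle hn
    exact le_antisymm (hfx.trans_eq hper) hle
  · have hfx : f^[n] x ≤ f^[1] x := hf.antitone_iterate_of_map_le hge hn
    exact le_antisymm hge (hper.symm.trans_le hfx)

end PeriodicPoint

namespace GOSC

variable {G : Type} [Group G] {K : GOSC G} {H : Subgroup G} {g : G} {s : Finset K.V} {v w : K.V}

/-- The closed geometric simplex spanned by the vertices in `s`, as a subset of `K.V → ℝ`. -/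
def closedSimplex (K : GOSC G) (s : Finset K.V) : Set (K.V → ℝ) :=
  {f | f ∈ stdSimplex ℝ K.V ∧ ∀ v ∉ s, f v = 0}

lemma mem_realSet_iff {f : K.V → ℝ} : f ∈ K.realSet ↔ ∃ s ∈ K.faces, f ∈ K.closedSimplex s :=
  ⟨fun ⟨hnonneg, hsum, s, hs, hsupp⟩ =>
      ⟨s, hs, ⟨hnonneg, hsum⟩, fun v => not_imp_comm.mp (hsupp v)⟩,
    fun ⟨s, hs, ⟨hnonneg, hsum⟩, hzero⟩ =>
      ⟨hnonneg, hsum, s, hs, fun v => not_imp_comm.mp (hzero v)⟩⟩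

lemma convex_closedSimplex (K : GOSC G) (s : Finset K.V) : Convex ℝ (K.closedSimplex s) := by
  intro f hf f' hf' a b ha hb hab
  refine ⟨convex_stdSimplex ℝ K.V hf.1 hf'.1 ha hb hab, fun v hv => ?_⟩
  simp [hf.2 v hv, hf'.2 v hv]

lemma mem_of_mem_star {f : K.Real} (hf : f.val ∈ K.closedSimplex s) (hv : f ∈ K.star v) : v ∈ s :=
  not_imp_comm.mp (hf.2 v) hv

lemma exists_mem_star (f : K.Real) : ∃ v, f ∈ K.star v := by
  have hsum : ∑ v, f.val v ≠ 0 := f.prop.2.1.trans_ne one_ne_zero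
  obtain ⟨v, -, hv⟩ := Finset.exists_ne_zero_of_sum_ne_zero hsum
  exact ⟨v, hv⟩

lemma vertexPoint_mem_closedSimplex (hv : v ∈ s) : (K.vertexPoint v).val ∈ K.closedSimplex s :=
  ⟨⟨(K.vertexPoint v).prop.1, (K.vertexPoint v).prop.2.1⟩,
    fun _ hw => if_neg (ne_of_mem_of_not_mem hv hw).symm⟩

lemma smul_val_smul (g : G) (f : K.Real) (v : K.V) : (g • f).val (K.smul g v) = f.val v :=
  congrArg f.val ((K.permOf g).symm_apply_apply v)

lemma smul_eq_self_iff {f : K.Real} : g • f = f ↔ ∀ v, f.val (K.smul g v) = f.val v := by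
  constructor
  · intro hf v
    rw [← smul_val_smul g f v, hf]
  · intro hf
    refine Subtype.ext (funext fun v => ?_)
    obtain ⟨w, rfl⟩ := (K.permOf g).surjective v
    exact (smul_val_smul g f w).trans (hf w).symm

lemma smul_vertexPoint (g : G) (v : K.V) :
    g • K.vertexPoint v = K.vertexPoint (K.smul g v) := by
  refine Subtype.ext (funext fun w => ?_)
  obtain ⟨u, rfl⟩ := (K.permOf g).surjective w
  have hinj : K.smul g u = K.smul g v ↔ u = v := (K.permOf g).injective.eq_iff
  refine (smul_val_smul g (K.vertexPoint v) u).trans ?_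
  simp only [vertexPoint, permOf, Equiv.coe_fn_mk, hinj]

lemma smul_eq_self_of_comparable (h : v ≤ K.smul g v ∨ K.smul g v ≤ v) : K.smul g v = v :=
  isFixedPt_of_monotone_of_mem_periodicPts (K.smul_mono g)
    ((K.permOf g).injective.mem_periodicPts v) h

lemma smul_eq_self_of_mem_star {f : K.Real} (hf : g • f = f) (hv : f ∈ K.star v) :
    K.smul g v = v := by
  obtain ⟨s, hs, hfs⟩ := mem_realSet_iff.mp f.prop
  have hgv : f ∈ K.star (K.smul g v) := (smul_eq_self_iff.mp hf v).trans_ne hv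
  exact smul_eq_self_of_comparable
    (K.face_chain s hs v (mem_of_mem_star hfs hv) _ (mem_of_mem_star hfs hgv))

/-- The fixed-point set `|K|^H`, written as in `GOSC.RealGConnected`. -/
def fixedReal (K : GOSC G) (H : Subgroup G) : Set K.Real :=
  {f | ∀ h ∈ H, h • f = f}

/-- The set of vertices of `K` fixed by `H`. -/
def fixedVertices (K : GOSC G) (H : Subgroup G) : Set K.V :=
  {v | ∀ h ∈ H, K.smul h v = v}

lemma vertexPoint_mem_fixedReal (hv : v ∈ K.fixedVertices H) :
    K.vertexPoint v ∈ K.fixedReal H := fun h hh => by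
  rw [smul_vertexPoint, hv h hh]

lemma convex_image_fixedReal_inter (H : Subgroup G) (hs : s ∈ K.faces) :
    Convex ℝ (Subtype.val '' K.fixedReal H ∩ K.closedSimplex s) := by
  rintro _ ⟨⟨f, hf, rfl⟩, hfs⟩ _ ⟨⟨f', hf', rfl⟩, hfs'⟩ a b ha hb hab
  have hmem := K.convex_closedSimplex s hfs hfs' ha hb hab
  refine ⟨⟨⟨_, mem_realSet_iff.mpr ⟨s, hs, hmem⟩⟩, fun h hh => smul_eq_self_iff.mpr fun v => ?_,
    rfl⟩, hmem⟩
  simp only [Pi.add_apply, Pi.smul_apply, smul_eq_self_iff.mp (hf h hh) v,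
    smul_eq_self_iff.mp (hf' h hh) v]

lemma joinedIn_fixedReal_of_mem_closedSimplex (hs : s ∈ K.faces) {a b : K.Real}
    (ha : a ∈ K.fixedReal H) (hb : b ∈ K.fixedReal H)
    (has : a.val ∈ K.closedSimplex s) (hbs : b.val ∈ K.closedSimplex s) :
    JoinedIn (K.fixedReal H) a b := by
  have hsegment : segment ℝ a.val b.val ⊆ Subtype.val '' K.fixedReal H :=
    ((convex_image_fixedReal_inter H hs).segment_subset
      ⟨Set.mem_image_of_mem _ ha, has⟩ ⟨Set.mem_image_of_mem _ hb, hbs⟩).trans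
      Set.inter_subset_left
  have hval : Topology.IsInducing (Subtype.val : K.Real → K.V → ℝ) := .subtypeVal
  exact (hval.joinedIn_image ha hb).mp (.of_segment_subset hsegment)

lemma exists_joinedIn_vertexPoint {a : K.Real} (ha : a ∈ K.fixedReal H) :
    ∃ v ∈ K.fixedVertices H, JoinedIn (K.fixedReal H) a (K.vertexPoint v) := by
  obtain ⟨s, hs, has⟩ := mem_realSet_iff.mp a.prop
  obtain ⟨v, hav⟩ := exists_mem_star a
  have hv : v ∈ K.fixedVertices H := fun h hh => smul_eq_self_of_mem_star (ha h hh) hav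
  exact ⟨v, hv, joinedIn_fixedReal_of_mem_closedSimplex hs ha (vertexPoint_mem_fixedReal hv) has
    (vertexPoint_mem_closedSimplex (mem_of_mem_star has hav))⟩

/-- Two `H`-fixed vertices of a common simplex of `K`; the two vertices may coincide. -/
def FixedEdge (K : GOSC G) (H : Subgroup G) (v w : K.V) : Prop :=
  v ∈ K.fixedVertices H ∧ w ∈ K.fixedVertices H ∧ ∃ s ∈ K.faces, v ∈ s ∧ w ∈ s

/-- The combinatorial form of `G`-connectedness: for every subgroup `H ≤ G`, any two `H`-fixed
vertices are joined by an edge path through `H`-fixed vertices. -/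
def EdgeGConnected (K : GOSC G) : Prop :=
  ∀ H : Subgroup G, ∀ v ∈ K.fixedVertices H, ∀ w ∈ K.fixedVertices H,
    Relation.ReflTransGen (K.FixedEdge H) v w

lemma FixedEdge.joinedIn (h : K.FixedEdge H v w) :
    JoinedIn (K.fixedReal H) (K.vertexPoint v) (K.vertexPoint w) := by
  obtain ⟨hv, hw, s, hs, hvs, hws⟩ := h
  exact joinedIn_fixedReal_of_mem_closedSimplex hs (vertexPoint_mem_fixedReal hv)
    (vertexPoint_mem_fixedReal hw) (vertexPoint_mem_closedSimplex hvs)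
    (vertexPoint_mem_closedSimplex hws)

lemma joinedIn_vertexPoint_of_reflTransGen (hv : v ∈ K.fixedVertices H)
    (h : Relation.ReflTransGen (K.FixedEdge H) v w) :
    JoinedIn (K.fixedReal H) (K.vertexPoint v) (K.vertexPoint w) := by
  induction h with
  | refl => exact .refl (vertexPoint_mem_fixedReal hv)
  | tail _ hedge ih => exact ih.trans hedge.joinedIn

theorem EdgeGConnected.realGConnected (hK : K.EdgeGConnected) : K.RealGConnected := by
  intro H a ha b hb
  obtain ⟨v, hv, hav⟩ := exists_joinedIn_vertexPoint ha
  obtain ⟨w, hw, hbw⟩ := exists_joinedIn_vertexPoint hb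
  have hvw := joinedIn_vertexPoint_of_reflTransGen hv (hK H v hv w hw)
  exact (hav.trans hvw).trans hbw.symm

end GOSC

section OrderComplex

variable {G P : Type} [Group G] [Fintype P] [PartialOrder P] [MulAction G P]
  {hmono : ∀ g : G, Monotone (fun p : P => g • p)}

lemma exists_mem_faces_orderComplexG {x y : P} (hxy : x ≤ y ∨ y ≤ x) :
    ∃ s ∈ (orderComplexG G P hmono).faces, x ∈ s ∧ y ∈ s := by
  classical
  refine ⟨({x, y} : Finset P), ⟨Finset.insert_nonempty x {y}, ?_⟩,
    Finset.mem_insert_self (α := P) x {y},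
    Finset.mem_insert_of_mem (α := P) (Finset.mem_singleton_self y)⟩
  simp [hxy, hxy.symm]

theorem PosetGConnected.edgeGConnected_orderComplexG (hconn : PosetGConnected G P) :
    (orderComplexG G P hmono).EdgeGConnected := by
  intro H x hx y hy
  refine Relation.ReflTransGen.mono ?_ x y (hconn H x hx y hy)
  rintro p q ⟨hp, hq, hpq⟩
  exact ⟨hp, hq, exists_mem_faces_orderComplexG hpq⟩

end OrderComplex

theorem realGConnected_of_posetGConnected_general (G P : Type) [Group G]
    [Fintype P] [PartialOrder P] [MulAction G P]
    (hmono : ∀ g : G, Monotone (fun p : P => g • p))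
    (hconn : PosetGConnected G P) :
    (orderComplexG G P hmono).RealGConnected :=
  hconn.edgeGConnected_orderComplexG.realGConnected

/-- Let `G` be a finite group, `P` a finite `G`-poset, and `K = K(P)` its
order complex. If `P` is `G`-connected, then the geometric realization `|K|` is
`G`-connected. -/
theorem realGConnected_of_posetGConnected (G P : Type) [Group G] [Finite G]
    [Fintype P] [PartialOrder P] [MulAction G P]
    (hmono : ∀ g : G, Monotone (fun p : P => g • p))
    (hconn : PosetGConnected G P) :
    (orderComplexG G P hmono).RealGConnected :=
  realGConnected_of_posetGConnected_general G P hmono hconn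
end

section
/- Let G be a finite group and let X and Y be finite T0 G-spaces. Then the equivariant Lusternik–Schnirelmann category of the product satisfies LS_G(X×Y) ≤ #G · LS_G(X) · LS_G(Y), where X×Y carries the product topology and diagonal G-action. -/
/-!
If the inclusion of `U` deforms equivariantly into an orbit `G x₀` and the inclusion of `V` into an
orbit `G y₀`, then the inclusion of `U × V` deforms into `G x₀ × G y₀`, which is the union of the
orbits `G (x₀, g y₀)` for `g ∈ G`. Orbits of a finite group in a `T₀` space are discrete, so these
pieces are relatively open, and their preimages under the end map of the deformation are `#G` open
`G`-categorical sets covering `U × V`.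
-/

open scoped unitInterval

theorem discreteTopology_of_isPretransitive (G : Type*) {X : Type*} [Group G]
    [TopologicalSpace X] [MulAction G X] [ContinuousConstSMul G X] [MulAction.IsPretransitive G X]
    [Finite X] [T0Space X] : DiscreteTopology X := by
  refine discreteTopology_iff_isOpen_singleton.mpr fun x ↦ ?_
  have : Nonempty X := ⟨x⟩
  obtain ⟨y, hy⟩ := exists_open_singleton_of_finite (X := X)
  obtain ⟨g, rfl⟩ := MulAction.exists_smul_eq G y x
  simpa only [Set.smul_set_singleton] using hy.smul g

theorem isDiscrete_orbit (G : Type*) {X : Type*} [Group G] [Finite G] [TopologicalSpace X]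
    [T0Space X] [MulAction G X] [ContinuousConstSMul G X] (x : X) :
    IsDiscrete (MulAction.orbit G x) := by
  have : Finite (MulAction.orbit G x) := Finite.finite_mulAction_orbit x
  have : ContinuousConstSMul G (MulAction.orbit G x) :=
    Topology.IsInducing.subtypeVal.continuousConstSMul id rfl
  exact ⟨discreteTopology_of_isPretransitive G⟩

theorem isDiscrete_prod {X Y : Type*} [TopologicalSpace X] [TopologicalSpace Y] {A : Set X}
    {B : Set Y} (hA : IsDiscrete A) (hB : IsDiscrete B) : IsDiscrete (A ×ˢ B) := by
  have := hA.to_subtype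
  have := hB.to_subtype
  exact ⟨(Homeomorph.Set.prod A B).symm.discreteTopology⟩

theorem orbit_prod_orbit {G X Y : Type*} [Group G] [MulAction G X] [MulAction G Y] (x : X)
    (y : Y) :
    MulAction.orbit G x ×ˢ MulAction.orbit G y = ⋃ g : G, MulAction.orbit G (x, g • y) := by
  ext ⟨a, b⟩
  simp only [Set.mem_prod, Set.mem_iUnion, MulAction.mem_orbit_iff, Prod.smul_mk, Prod.mk.injEq]
  constructor
  · rintro ⟨⟨k, rfl⟩, l, rfl⟩
    exact ⟨k⁻¹ * l, k, rfl, by rw [← mul_smul, mul_inv_cancel_left]⟩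
  · rintro ⟨g, k, rfl, rfl⟩
    exact ⟨⟨k, rfl⟩, k * g, mul_smul k g y⟩

theorem gInvariant_orbit (G : Type*) {X : Type*} [Group G] [MulAction G X] (x : X) :
    GInvariant G (MulAction.orbit G x) :=
  fun g _ hy ↦ MulAction.mem_orbit_of_mem_orbit g hy

section Deformation

variable {G X Y : Type*} [Group G] [TopologicalSpace X] [MulAction G X] [TopologicalSpace Y]
  [MulAction G Y]

variable (G) in
/-- `U` is equivariantly deformable in `X` into `A`: the inclusion of `U` is `G`-homotopic in `X`
to a map with values in `A`. With `A` an orbit this is `GCategoricalAt`, but the class of all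
targets `A` is closed under products. The set `U` need not be invariant, so equivariance is only
required where `g` keeps a point in `U`, as in `GCategoricalAt`. -/
def EqDeformsInto (U A : Set X) : Prop :=
  ∃ F : U × I → X, Continuous F ∧ (∀ u : U, F (u, 0) = u) ∧
    (∀ (g : G) (u : U) (h : g • (u : X) ∈ U) (t : I), F (⟨g • (u : X), h⟩, t) = g • F (u, t)) ∧
    ∀ u : U, F (u, 1) ∈ A

theorem gCategoricalAt_iff_eqDeformsInto_orbit {U : Set X} {x : X} :
    GCategoricalAt G X U x ↔ EqDeformsInto G U (MulAction.orbit G x) :=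
  Iff.rfl

namespace EqDeformsInto

theorem prod {U A : Set X} {V B : Set Y} (hU : EqDeformsInto G U A) (hV : EqDeformsInto G V B) :
    EqDeformsInto G (U ×ˢ V) (A ×ˢ B) := by
  obtain ⟨F, hF, hF0, hFg, hF1⟩ := hU
  obtain ⟨K, hK, hK0, hKg, hK1⟩ := hV
  let toU (p : ↥(U ×ˢ V)) : U := ⟨p.1.1, p.2.1⟩
  let toV (p : ↥(U ×ˢ V)) : V := ⟨p.1.2, p.2.2⟩
  have htoU : Continuous toU := by fun_prop
  have htoV : Continuous toV := by fun_prop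
  exact ⟨fun z ↦ (F (toU z.1, z.2), K (toV z.1, z.2)), by fun_prop,
    fun p ↦ Prod.ext (hF0 (toU p)) (hK0 (toV p)),
    fun g p h t ↦ Prod.ext (hFg g (toU p) h.1 t) (hKg g (toV p) h.2 t),
    fun p ↦ ⟨hF1 (toU p), hK1 (toV p)⟩⟩

theorem exists_iUnion_eq {ι : Type*} {U A : Set X} {B : ι → Set X} (hUA : EqDeformsInto G U A)
    (hU : IsOpen U) (hUG : GInvariant G U) (hB : ∀ i, IsOpen ((↑) ⁻¹' B i : Set A))
    (hBG : ∀ i, GInvariant G (B i)) (hAB : A ⊆ ⋃ i, B i) :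
    ∃ W : ι → Set X, (∀ i, IsOpen (W i)) ∧ (∀ i, GInvariant G (W i)) ∧ ⋃ i, W i = U ∧
      ∀ i, EqDeformsInto G (W i) (B i) := by
  obtain ⟨F, hF, hF0, hFg, hF1⟩ := hUA
  let endMap (u : U) : A := ⟨F (u, 1), hF1 u⟩
  have hend : Continuous endMap := by fun_prop
  let W (i : ι) : Set X := (↑) '' {u : U | F (u, 1) ∈ B i}
  have hWU (i : ι) : W i ⊆ U := Subtype.coe_image_subset U _
  have hWB (i : ι) (w : W i) : F (Set.inclusion (hWU i) w, 1) ∈ B i := by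
    obtain ⟨_, u, hu, rfl⟩ := w
    exact hu
  refine ⟨W, fun i ↦ hU.isOpenMap_subtype_val _ ((hB i).preimage hend), ?_, ?_, fun i ↦
    ⟨fun z ↦ F (Set.inclusion (hWU i) z.1, z.2), ?_, fun w ↦ hF0 _,
      fun g w h ↦ hFg g (Set.inclusion (hWU i) w) (hWU i h), hWB i⟩⟩
  · rintro i g _ ⟨u, hu, rfl⟩
    refine ⟨⟨g • (u : X), hUG g u u.2⟩, ?_, rfl⟩
    simpa only [Set.mem_ofPred_eq, hFg] using hBG i g _ hu
  · refine (Set.iUnion_subset hWU).antisymm fun u hu ↦ ?_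
    obtain ⟨i, hi⟩ := Set.mem_iUnion.mp (hAB (hF1 ⟨u, hu⟩))
    exact Set.mem_iUnion.mpr ⟨i, ⟨u, hu⟩, hi, rfl⟩
  · exact hF.comp (((continuous_inclusion (hWU i)).comp continuous_fst).prodMk continuous_snd)

end EqDeformsInto

theorem GCategoricalAt.exists_iUnion_eq_prod {U : Set X} {V : Set Y} {x : X} {y : Y}
    (hUx : GCategoricalAt G X U x) (hVy : GCategoricalAt G Y V y) (hU : IsOpen U) (hV : IsOpen V)
    (hUG : GInvariant G U) (hVG : GInvariant G V) (hx : IsDiscrete (MulAction.orbit G x))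
    (hy : IsDiscrete (MulAction.orbit G y)) :
    ∃ W : G → Set (X × Y), (∀ g, IsOpen (W g)) ∧ (∀ g, GInvariant G (W g)) ∧
      ⋃ g, W g = U ×ˢ V ∧ ∀ g, GCategoricalAt G (X × Y) (W g) (x, g • y) := by
  have := (isDiscrete_prod hx hy).to_subtype
  simp only [gCategoricalAt_iff_eqDeformsInto_orbit] at hUx hVy ⊢
  exact (hUx.prod hVy).exists_iUnion_eq (hU.prod hV)
    (fun g p hp ↦ ⟨hUG g _ hp.1, hVG g _ hp.2⟩) (fun _ ↦ isOpen_discrete _)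
    (fun g ↦ gInvariant_orbit G (x, g • y)) (orbit_prod_orbit x y).subset

end Deformation

section Cover

variable {G X Y ι κ : Type*} [Group G] [TopologicalSpace X] [MulAction G X] [TopologicalSpace Y]
  [MulAction G Y]

variable (G) in
/-- A `G`-categorical cover of `X`: a family of the kind counted by `eqLS G X`, with an arbitrary
index type in place of `Fin n`. -/
structure IsGCategoricalCover (U : ι → Set X) : Prop where
  isOpen (i : ι) : IsOpen (U i)
  gInvariant (i : ι) : GInvariant G (U i)
  iUnion_eq_univ : ⋃ i, U i = Set.univ
  gCategorical (i : ι) : GCategorical G X (U i)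

namespace IsGCategoricalCover

theorem comp_equiv {U : ι → Set X} (hU : IsGCategoricalCover G U) (e : κ ≃ ι) :
    IsGCategoricalCover G (U ∘ e) where
  isOpen k := hU.isOpen (e k)
  gInvariant k := hU.gInvariant (e k)
  iUnion_eq_univ := (e.surjective.iUnion_comp U).trans hU.iUnion_eq_univ
  gCategorical k := hU.gCategorical (e k)

theorem eqLS_le_card {U : ι → Set X} (hU : IsGCategoricalCover G U) :
    eqLS G X ≤ ENat.card ι := by
  cases finite_or_infinite ι with
  | inl _ =>
    have hV := hU.comp_equiv (Finite.equivFin ι).symm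
    exact sInf_le ⟨Nat.card ι, ENat.card_eq_coe_natCard ι, _, hV.isOpen, hV.gInvariant,
      hV.iUnion_eq_univ, hV.gCategorical⟩
  | inr _ => simp only [ENat.card_eq_top_of_infinite, le_top]

theorem exists_prod [Finite G] [T0Space X] [ContinuousConstSMul G X] [T0Space Y]
    [ContinuousConstSMul G Y] {U : ι → Set X} {V : κ → Set Y} (hU : IsGCategoricalCover G U)
    (hV : IsGCategoricalCover G V) :
    ∃ W : (ι × κ) × G → Set (X × Y), IsGCategoricalCover G W := by
  choose x hx using hU.gCategorical
  choose y hy using hV.gCategorical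
  choose W hWo hWG hWUV hWc using fun p : ι × κ ↦ (hx p.1).exists_iUnion_eq_prod (hy p.2)
    (hU.isOpen p.1) (hV.isOpen p.2) (hU.gInvariant p.1) (hV.gInvariant p.2)
    (isDiscrete_orbit G (x p.1)) (isDiscrete_orbit G (y p.2))
  refine ⟨fun q ↦ W q.1 q.2, fun q ↦ hWo q.1 q.2, fun q ↦ hWG q.1 q.2, ?_,
    fun q ↦ ⟨_, hWc q.1 q.2⟩⟩
  calc ⋃ q : (ι × κ) × G, W q.1 q.2 = ⋃ p : ι × κ, U p.1 ×ˢ V p.2 := by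
        simp only [Set.iUnion_prod', hWUV]
    _ = Set.univ := by
        rw [Set.iUnion_prod, hU.iUnion_eq_univ, hV.iUnion_eq_univ, Set.univ_prod_univ]

end IsGCategoricalCover

theorem exists_isGCategoricalCover_of_eqLS_ne_top (h : eqLS G X ≠ ⊤) :
    ∃ (n : ℕ) (U : Fin n → Set X), eqLS G X = n ∧ IsGCategoricalCover G U := by
  have hcovers := Set.nonempty_iff_ne_empty.mpr fun hempty ↦
    h ((congrArg sInf hempty).trans sInf_empty)
  obtain ⟨n, hn, U, hUo, hUG, hUX, hUc⟩ := csInf_mem hcovers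
  exact ⟨n, U, hn, hUo, hUG, hUX, hUc⟩

theorem eqLS_eq_zero_iff : eqLS G X = 0 ↔ IsEmpty X := by
  constructor
  · intro h
    obtain ⟨n, U, hn, hU⟩ :=
      exists_isGCategoricalCover_of_eqLS_ne_top (h.trans_ne ENat.zero_ne_top)
    obtain rfl : n = 0 := by simpa [h, eq_comm] using hn
    rw [← Set.univ_eq_empty_iff, ← hU.iUnion_eq_univ, Set.iUnion_of_empty]
  · intro _
    have hU : IsGCategoricalCover G (Empty.elim : Empty → Set X) :=
      ⟨nofun, nofun, Subsingleton.elim _ _, nofun⟩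
    simpa using hU.eqLS_le_card

end Cover

theorem eqLS_prod_le_general (G X Y : Type*) [Group G] [Finite G]
    [TopologicalSpace X] [T0Space X] [MulAction G X] [ContinuousConstSMul G X]
    [TopologicalSpace Y] [T0Space Y] [MulAction G Y] [ContinuousConstSMul G Y] :
    eqLS G (X × Y) ≤ (Nat.card G : ℕ∞) * eqLS G X * eqLS G Y := by
  cases isEmpty_or_nonempty (X × Y) with
  | inl hempty => simp only [eqLS_eq_zero_iff.mpr hempty, zero_le]
  | inr hnonempty =>
    obtain ⟨_, _⟩ := nonempty_prod.mp hnonempty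
    have hG : (Nat.card G : ℕ∞) ≠ 0 := Nat.cast_ne_zero.mpr Nat.card_pos.ne'
    have hX : eqLS G X ≠ 0 := by simp [eqLS_eq_zero_iff]
    have hY : eqLS G Y ≠ 0 := by simp [eqLS_eq_zero_iff]
    by_cases hXtop : eqLS G X = ⊤
    · simp [hXtop, ENat.mul_top hG, ENat.top_mul hY]
    by_cases hYtop : eqLS G Y = ⊤
    · simp [hYtop, ENat.mul_top (mul_ne_zero hG hX)]
    obtain ⟨n, U, hn, hU⟩ := exists_isGCategoricalCover_of_eqLS_ne_top hXtop
    obtain ⟨m, V, hm, hV⟩ := exists_isGCategoricalCover_of_eqLS_ne_top hYtop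
    obtain ⟨W, hW⟩ := hU.exists_prod hV
    calc eqLS G (X × Y) ≤ ENat.card ((Fin n × Fin m) × G) := hW.eqLS_le_card
      _ = Nat.card G * eqLS G X * eqLS G Y := by
        simp only [hn, hm, ENat.card_eq_coe_natCard, Nat.card_prod, Nat.card_fin, Nat.cast_mul]
        ring

/-- Let `G` be a finite group and `X`, `Y` finite `T₀` `G`-spaces. Then the
equivariant Lusternik–Schnirelmann category of the product (with the product topology and the
diagonal `G`-action) satisfies `LS_G(X × Y) ≤ #G · LS_G(X) · LS_G(Y)`. -/
theorem eqLS_prod_le (G X Y : Type*) [Group G] [Finite G]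
    [TopologicalSpace X] [Finite X] [T0Space X] [MulAction G X] [ContinuousConstSMul G X]
    [TopologicalSpace Y] [Finite Y] [T0Space Y] [MulAction G Y] [ContinuousConstSMul G Y] :
    eqLS G (X × Y) ≤ (Nat.card G : ℕ∞) * eqLS G X * eqLS G Y :=
  eqLS_prod_le_general G X Y
end

section
/- Let G be a finite group acting by homeomorphisms on a finite T0 topological space X, and let x ∈ X. Then the orbit O(x) = {g·x : g ∈ G}, equipped with the subspace topology from X, is discrete. -/
/- Translations are homeomorphisms, so under a transitive action one isolated point makes every
point isolated. A nonempty finite T₀ space has an isolated point: its minimal nonempty open sets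
are singletons. Apply both facts to the orbit with its subspace topology. -/

theorem discreteTopology_of_isPretransitive_of_finite (G : Type*) {X : Type*} [Group G]
    [TopologicalSpace X] [T0Space X] [Finite X] [MulAction G X] [ContinuousConstSMul G X]
    [MulAction.IsPretransitive G X] : DiscreteTopology X := by
  cases isEmpty_or_nonempty X
  · infer_instance
  · obtain ⟨x, hx⟩ := exists_open_singleton_of_finite (X := X)
    exact (MulAction.IsPretransitive.discreteTopology_iff G x).2 hx

instance continuousConstSMul_orbit {M X : Type*} [Monoid M] [TopologicalSpace X] [MulAction M X]
    [ContinuousConstSMul M X] (x : X) : ContinuousConstSMul M (MulAction.orbit M x) :=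
  Topology.IsInducing.subtypeVal.continuousConstSMul id rfl

theorem orbit_discrete_general (G : Type*) {X : Type*} [Group G] [TopologicalSpace X] [T0Space X]
    [MulAction G X] [ContinuousConstSMul G X] (x : X) [Finite (MulAction.orbit G x)] :
    DiscreteTopology (MulAction.orbit G x) :=
  discreteTopology_of_isPretransitive_of_finite G

/-- Let `G` be a finite group acting by homeomorphisms on a finite `T₀`
topological space `X`, and let `x ∈ X`. Then the orbit `O(x) = {g • x : g ∈ G}`, equipped
with the subspace topology from `X`, is discrete. -/
theorem orbit_discrete (G X : Type*) [Group G] [Finite G]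
    [TopologicalSpace X] [Finite X] [T0Space X]
    [MulAction G X] [ContinuousConstSMul G X] (x : X) :
    DiscreteTopology (MulAction.orbit G x) :=
  orbit_discrete_general G x
end

section
/- Let G be a finite group and X a finite T0 G-space. Then LS_G(sd(X)) ≤ LS_G(X): the equivariant Lusternik–Schnirelmann category does not increase under barycentric subdivision. -/
/-! ### Module B: finite G-posets (= finite T₀ G-spaces) and barycentric subdivision -/

/-- The down-set (Alexandrov) topology on a preorder: open sets are the downwards-closed
sets.  Under the identification of finite `T₀` spaces with finite posets via the
specialization order, this recovers the topology of the finite space. -/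
def downTop (P : Type*) [Preorder P] : TopologicalSpace P where
  IsOpen U := ∀ ⦃a⦄, a ∈ U → ∀ ⦃b⦄, b ≤ a → b ∈ U
  isOpen_univ := fun a _ b _ => Set.mem_univ b
  isOpen_inter := fun s t hs ht a ha b hba => ⟨hs ha.1 hba, ht ha.2 hba⟩
  isOpen_sUnion := fun S hS a ha b hba => by
    obtain ⟨t, htS, hat⟩ := ha
    exact ⟨t, htS, hS t htS hat hba⟩

/-- A finite `T₀` `G`-space, encoded as a finite poset (via the specialization order)
with an action of `G` by monotone maps (equivalently, by homeomorphisms). -/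
structure FinGPoset (G : Type) [Group G] : Type 1 where
  /-- the underlying set of points -/
  carrier : Type
  [fin : Fintype carrier]
  [po : PartialOrder carrier]
  /-- the action of `G` -/
  smul : G → carrier → carrier
  smul_one : ∀ x, smul 1 x = x
  smul_mul : ∀ g h x, smul (g * h) x = smul g (smul h x)
  smul_mono : ∀ g : G, ∀ x y : carrier, x ≤ y → smul g x ≤ smul g y

attribute [instance] FinGPoset.fin FinGPoset.po

namespace FinGPoset

variable {G : Type} [Group G]

/-- The nonempty chains of a poset. -/
def chains (P : Type) [PartialOrder P] : Type :=
  {c : Finset P // c.Nonempty ∧ ∀ x ∈ c, ∀ y ∈ c, x ≤ y ∨ y ≤ x}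

noncomputable instance (P : Type) [PartialOrder P] [Fintype P] : Fintype (chains P) := by
  classical exact Subtype.fintype _

instance (P : Type) [PartialOrder P] : PartialOrder (chains P) :=
  Subtype.partialOrder _

/-- The barycentric subdivision of a finite `T₀` `G`-space: the poset of nonempty chains,
ordered by inclusion, with the induced `G`-action `g • {p₀ < ⋯ < pₙ} = {g•p₀ < ⋯ < g•pₙ}`. -/
noncomputable def sd (X : FinGPoset G) : FinGPoset G := by
  classical
  exact
  { carrier := chains X.carrier
    smul := fun g c => ⟨c.val.image (X.smul g), c.prop.1.image _, by
      intro x hx y hy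
      rcases Finset.mem_image.mp hx with ⟨a, ha, rfl⟩
      rcases Finset.mem_image.mp hy with ⟨b, hb, rfl⟩
      rcases c.prop.2 a ha b hb with h | h
      · exact Or.inl (X.smul_mono g _ _ h)
      · exact Or.inr (X.smul_mono g _ _ h)⟩
    smul_one := fun c => by
      apply Subtype.ext
      show c.val.image (X.smul 1) = c.val
      rw [Finset.image_congr (g := id) (fun x _ => X.smul_one x), Finset.image_id]
    smul_mul := fun g h c => by
      apply Subtype.ext
      show c.val.image (X.smul (g * h)) = (c.val.image (X.smul h)).image (X.smul g)
      rw [Finset.image_image]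
      exact Finset.image_congr (fun x _ => X.smul_mul g h x)
    smul_mono := fun g c d hcd => by
      show c.val.image (X.smul g) ≤ d.val.image (X.smul g)
      exact Finset.image_subset_image hcd }

/-- Iterated barycentric subdivision. -/
noncomputable def sdIter : ℕ → FinGPoset G → FinGPoset G
  | 0, X => X
  | (n + 1), X => (sdIter n X).sd

/-- The `G`-action on a finite `T₀` `G`-space, as a `MulAction`. -/
def mulAction (X : FinGPoset G) : MulAction G X.carrier where
  smul := X.smul
  one_smul := X.smul_one
  mul_smul := X.smul_mul

/-- The set of points of `X` fixed by every element of the subgroup `H`. -/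
def fixedBy (X : FinGPoset G) (H : Subgroup G) : Set X.carrier :=
  {x | ∀ h ∈ H, X.smul h x = x}

/-- The set of points of `X` fixed by every element of `G`. -/
def fixedSet (X : FinGPoset G) : Set X.carrier :=
  {x | ∀ g : G, X.smul g x = x}

/-- `X` is `G`-connected: for every subgroup `H ≤ G`, the fixed-point set `X^H`
(with the topology of the finite space) is path-connected. -/
def GConnected (X : FinGPoset G) : Prop :=
  letI : TopologicalSpace X.carrier := downTop X.carrier
  ∀ H : Subgroup G, ∀ a ∈ X.fixedBy H, ∀ b ∈ X.fixedBy H, JoinedIn (X.fixedBy H) a b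

/-- A subset of a finite `T₀` `G`-space is open iff it is open in the down-set topology. -/
def IsOpenP (X : FinGPoset G) (U : Set X.carrier) : Prop :=
  letI : TopologicalSpace X.carrier := downTop X.carrier
  IsOpen U

/-- The equivariant topological complexity of a finite `T₀` `G`-space. -/
noncomputable def TCG (X : FinGPoset G) : ℕ∞ :=
  letI : TopologicalSpace X.carrier := downTop X.carrier
  letI : MulAction G X.carrier := X.mulAction
  eqTC G X.carrier

/-- The equivariant Lusternik–Schnirelmann category of a finite `T₀` `G`-space. -/
noncomputable def LSG (X : FinGPoset G) : ℕ∞ :=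
  letI : TopologicalSpace X.carrier := downTop X.carrier
  letI : MulAction G X.carrier := X.mulAction
  eqLS G X.carrier

/-- The saturation `G · U` of a subset `U` of a `G`-space. -/
def satur (X : FinGPoset G) (U : Set X.carrier) : Set X.carrier :=
  {v | ∃ g : G, ∃ u ∈ U, v = X.smul g u}

/-- A subset of a finite `T₀` `G`-space is `G`-categorical: it is invariant and its
inclusion is `G`-homotopic to a map taking values in a single orbit. -/
def GCat (X : FinGPoset G) (U : Set X.carrier) : Prop :=
  letI : TopologicalSpace X.carrier := downTop X.carrier
  letI : MulAction G X.carrier := X.mulAction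
  GInvariant G U ∧ GCategorical G X.carrier U

end FinGPoset

/-!
A `G`-homotopy `F` on `U` moves only through comparisons: for `s` close to `t`, finiteness gives
`F (·, s) ≤ F (·, t)` pointwise.  As the unit interval is connected, it is enough to see that
monotone equivariant maps `f ≤ k` on `U` induce `G`-homotopic maps on chains in `U`.

The set `f(c) ∪ k(c)` need not be a chain when `c` is one, so `f` is changed into `k` one rank at a
time.  Each elementary change replaces `f` by `k` on points of a single rank, and then
`f p₀ ≤ k p₀ ≤ f p₁ ≤ k p₁ ≤ ⋯` along every chain `p₀ < p₁ < ⋯`.  Now `f(c) ∪ k(c)` is a chain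
containing both `f(c)` and `k(c)`, and comparable maps into a finite space are homotopic.

At time `1`, the image of a chain is a chain in an orbit.  Orbits are antichains, because the action
preserves rank, so this image is a single vertex.  Finally, chains in the members of an open cover
cover the subdivision: an open set containing the maximum of a chain contains the whole chain.
-/

open Topology ContinuousMap

section OrderMaps

variable {α β : Type*} [Preorder α] [Preorder β]

/-- Monotone maps `f` and `k` are interleaved if `f p₀ ≤ k p₀ ≤ f p₁ ≤ k p₁ ≤ ⋯` along every
strictly increasing sequence `p₀ < p₁ < ⋯`. -/
structure Interleaved (f k : α →o β) : Prop where
  le : f ≤ k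
  le_of_lt : ∀ ⦃a b⦄, a < b → k a ≤ f b

/-- The monotone map equal to `f` at the points of rank less than `n` and to `k` elsewhere; it
passes from `k` to `f ≤ k` as `n` grows. -/
def switchAtRank {ρ : α → ℕ} (hρ : Monotone ρ) {f k : α →o β} (hfk : f ≤ k) (n : ℕ) : α →o β where
  toFun a := if ρ a < n then f a else k a
  monotone' a b hab := by
    have hrank := hρ hab
    dsimp only
    split_ifs
    · exact f.monotone hab
    · exact (hfk a).trans (k.monotone hab)
    · omega
    · exact k.monotone hab

theorem switchAtRank_apply {ρ : α → ℕ} (hρ : Monotone ρ) {f k : α →o β} (hfk : f ≤ k) (n : ℕ)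
    (a : α) : switchAtRank hρ hfk n a = if ρ a < n then f a else k a :=
  rfl

theorem switchAtRank_zero {ρ : α → ℕ} (hρ : Monotone ρ) {f k : α →o β} (hfk : f ≤ k) :
    switchAtRank hρ hfk 0 = k := by
  ext a
  simp [switchAtRank_apply]

theorem switchAtRank_of_forall_lt {ρ : α → ℕ} (hρ : Monotone ρ) {f k : α →o β} (hfk : f ≤ k)
    {n : ℕ} (hn : ∀ a, ρ a < n) : switchAtRank hρ hfk n = f := by
  ext a
  simp [switchAtRank_apply, hn]

theorem interleaved_switchAtRank {α : Type*} [PartialOrder α] {ρ : α → ℕ} (hρ : StrictMono ρ)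
    {f k : α →o β} (hfk : f ≤ k) (n : ℕ) :
    Interleaved (switchAtRank hρ.monotone hfk (n + 1)) (switchAtRank hρ.monotone hfk n) where
  le a := by
    simp only [switchAtRank_apply]
    split_ifs
    · exact le_rfl
    · exact hfk a
    · omega
    · exact le_rfl
  le_of_lt a b hab := by
    have hrank := hρ hab
    simp only [switchAtRank_apply]
    split_ifs
    · exact f.monotone hab.le
    · exact (hfk a).trans (k.monotone hab.le)
    · omega
    · exact k.monotone hab.le

end OrderMaps

section LowerSetTopology

instance instIsLowerSetSubtype {P : Type*} [Preorder P] [TopologicalSpace P]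
    [Topology.IsLowerSet P] (V : Set P) : Topology.IsLowerSet V := by
  refine ⟨TopologicalSpace.ext_iff.2 fun A => ⟨?_, fun hA => ?_⟩⟩
  · rintro ⟨B, hB, rfl⟩ v w hwv hv
    exact IsLowerSet.isOpen_iff_isLowerSet.1 hB hwv hv
  · refine ⟨lowerClosure (Subtype.val '' A),
      IsLowerSet.isOpen_iff_isLowerSet.2 (lowerClosure _).lower, ?_⟩
    ext v
    constructor
    · rintro ⟨_, ⟨w, hw, rfl⟩, hvw⟩
      exact hA hvw hw
    · exact fun hv => ⟨v, ⟨v, hv, rfl⟩, le_rfl⟩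

theorem homotopicWith_of_specializes {α β : Type*} [TopologicalSpace α] [TopologicalSpace β]
    {φ ψ : C(α, β)} {P : C(α, β) → Prop} (h : ∀ a, φ a ⤳ ψ a) (hφ : P φ) (hψ : P ψ) :
    HomotopicWith φ ψ P := by
  classical
  let s : Set (unitInterval × α) := {p | p.1 ≠ 1}
  have hs : IsOpen s := isOpen_ne_fun continuous_fst continuous_const
  have hcont : Continuous (s.piecewise (φ ∘ Prod.snd) (ψ ∘ Prod.snd)) :=
    hs.continuous_piecewise_of_specializes (by fun_prop) (by fun_prop) fun p => h p.2
  refine ⟨⟨⟨⟨_, hcont⟩, fun a => ?_, fun a => ?_⟩, fun t => ?_⟩⟩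
  · exact Set.piecewise_eq_of_mem s _ _ (zero_ne_one : (0 : unitInterval) ≠ 1)
  · exact Set.piecewise_eq_of_notMem s _ _ fun hne => hne rfl
  · by_cases ht : t = 1
    · convert hψ using 1
      exact ContinuousMap.ext fun a => Set.piecewise_eq_of_notMem s _ _ fun hne => hne ht
    · convert hφ using 1
      exact ContinuousMap.ext fun a => Set.piecewise_eq_of_mem s _ _ ht

end LowerSetTopology

section Equivariance

variable (G : Type*)

/-- A map defined on a subset `V` of a `G`-set is equivariant if it commutes with the action
wherever both sides make sense; `V` is not required to be invariant. -/
def EquivariantOn {α β : Type*} [SMul G α] [SMul G β] {V : Set α} (f : V → β) : Prop :=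
  ∀ (g : G) (v : V) (h : g • (v : α) ∈ V), f ⟨g • (v : α), h⟩ = g • f v

/-- `G`-homotopy of continuous maps defined on a subset of a `G`-space: a homotopy through
equivariant maps. -/
abbrev GHomotopic {α β : Type*} [TopologicalSpace α] [TopologicalSpace β] [SMul G α] [SMul G β]
    {V : Set α} (φ ψ : C(V, β)) : Prop :=
  HomotopicWith φ ψ fun χ => EquivariantOn G χ

variable {G}

theorem EquivariantOn.switchAtRank {α β : Type*} [Preorder α] [SMul G α] [Preorder β] [SMul G β]
    {V : Set α} {ρ : V → ℕ} (hρ : Monotone ρ)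
    (hinv : ∀ (g : G) (v : V) (h : g • (v : α) ∈ V), ρ ⟨g • (v : α), h⟩ = ρ v)
    {f k : V →o β} (hfk : f ≤ k) (hf : EquivariantOn G f) (hk : EquivariantOn G k) (n : ℕ) :
    EquivariantOn G (switchAtRank hρ hfk n) := by
  intro g v h
  simp only [switchAtRank_apply, hinv g v h]
  split_ifs
  · exact hf g v h
  · exact hk g v h

end Equivariance

section Rank

/-- The rank of a point of a finite poset: the number of points below it.  Only its strict
monotonicity and its invariance under automorphisms matter. -/
noncomputable def lowerRank {P : Type*} [Preorder P] (x : P) : ℕ :=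
  (Set.Iic x).ncard

theorem lowerRank_strictMono {P : Type*} [Preorder P] [Finite P] :
    StrictMono (lowerRank : P → ℕ) := fun _ _ h =>
  Set.ncard_lt_ncard (Set.Iic_ssubset_Iic.2 h)

theorem lowerRank_le_card {P : Type*} [Preorder P] [Finite P] (x : P) :
    lowerRank x ≤ Nat.card P :=
  Set.ncard_le_card _

theorem lowerRank_smul {G P : Type*} [Group G] [Preorder P] [MulAction G P]
    [CovariantClass G P HSMul.hSMul LE.le] (g : G) (x : P) : lowerRank (g • x) = lowerRank x := by
  let e : P ≃o P := (MulAction.toPerm g).toOrderIso (smul_mono_right g) (smul_mono_right g⁻¹)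
  rw [lowerRank, show g • x = e x from rfl, ← e.image_Iic,
    Set.ncard_image_of_injective _ e.injective, lowerRank]

theorem isAntichain_orbit (G : Type*) {P : Type*} [Group G] [PartialOrder P] [Finite P]
    [MulAction G P] [CovariantClass G P HSMul.hSMul LE.le] (x₀ : P) :
    IsAntichain (· ≤ ·) (MulAction.orbit G x₀) := by
  rintro _ ⟨g, rfl⟩ _ ⟨h, rfl⟩ hne hle
  have hlt := lowerRank_strictMono (hle.lt_of_ne hne)
  simp only [lowerRank_smul, lt_irrefl] at hlt

end Rank

namespace FinGPoset

variable {G : Type} [Group G] {X Y : FinGPoset G}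

instance instTopologicalSpaceCarrier (X : FinGPoset G) : TopologicalSpace X.carrier :=
  downTop X.carrier

instance instMulActionCarrier (X : FinGPoset G) : MulAction G X.carrier :=
  X.mulAction

instance instIsLowerSetCarrier (X : FinGPoset G) : Topology.IsLowerSet X.carrier :=
  ⟨TopologicalSpace.ext_iff.2 fun _ => ⟨fun h _ _ hba ha => h ha hba, fun h _ ha _ hba => h hba ha⟩⟩

instance instCovariantClassCarrier (X : FinGPoset G) :
    CovariantClass G X.carrier HSMul.hSMul LE.le :=
  ⟨fun g _ _ h => X.smul_mono g _ _ h⟩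

section Chains

instance instSetLikeSd (X : FinGPoset G) : SetLike X.sd.carrier X.carrier where
  coe c := (Subtype.val (show chains X.carrier from c) : Finset X.carrier)
  coe_injective := Finset.coe_injective.comp Subtype.val_injective

theorem sd_nonempty (c : X.sd.carrier) : ∃ x, x ∈ c :=
  (Subtype.prop (show chains X.carrier from c)).1

theorem sd_le_total (c : X.sd.carrier) {x y : X.carrier} (hx : x ∈ c) (hy : y ∈ c) :
    x ≤ y ∨ y ≤ x :=
  (Subtype.prop (show chains X.carrier from c)).2 x hx y hy

theorem sd_le_iff {c d : X.sd.carrier} : c ≤ d ↔ ∀ x ∈ c, x ∈ d :=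
  Iff.rfl

theorem mem_sd_smul {g : G} {c : X.sd.carrier} {x : X.carrier} :
    x ∈ g • c ↔ ∃ y ∈ c, g • y = x := by
  classical
  exact Finset.mem_image

/-- The point of the subdivision given by a nonempty set of pairwise comparable points. -/
noncomputable def chainOf (s : Set X.carrier) (hne : s.Nonempty)
    (htotal : ∀ x ∈ s, ∀ y ∈ s, x ≤ y ∨ y ≤ x) : X.sd.carrier :=
  show chains X.carrier from
    ⟨s.toFinite.toFinset, by simpa using hne, by simpa using htotal⟩

theorem mem_chainOf {s : Set X.carrier} {hne : s.Nonempty}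
    {htotal : ∀ x ∈ s, ∀ y ∈ s, x ≤ y ∨ y ≤ x} {x : X.carrier} :
    x ∈ chainOf s hne htotal ↔ x ∈ s :=
  s.toFinite.mem_toFinset

theorem exists_mem_forall_le (c : X.sd.carrier) : ∃ m ∈ c, ∀ x ∈ c, x ≤ m := by
  obtain ⟨m, hm, hmax⟩ := (c : Set X.carrier).toFinite.exists_maximal (sd_nonempty c)
  exact ⟨m, hm, fun x hx => (sd_le_total c hx hm).elim id (hmax hx)⟩

theorem gHomotopic_of_comparable {α : Type*} [Preorder α] [TopologicalSpace α]
    [Topology.IsLowerSet α] [SMul G α] {V : Set α} {φ ψ : C(V, X.sd.carrier)}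
    (hφ : EquivariantOn G φ) (hψ : EquivariantOn G ψ)
    (hφψ : ∀ v, ∀ x ∈ φ v, ∀ y ∈ ψ v, x ≤ y ∨ y ≤ x) : GHomotopic G φ ψ := by
  let union (v : V) : X.sd.carrier :=
    chainOf (φ v ∪ ψ v) ((sd_nonempty (φ v)).imp fun _ => .inl) (by
      rintro x (hx | hx) y (hy | hy)
      · exact sd_le_total _ hx hy
      · exact hφψ v x hx y hy
      · exact (hφψ v y hy x hx).symm
      · exact sd_le_total _ hx hy)
  have mem_union {v : V} {x : X.carrier} : x ∈ union v ↔ x ∈ φ v ∨ x ∈ ψ v := mem_chainOf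
  have union_mono : Monotone union := fun v w hvw x hx =>
    mem_union.2 <| (mem_union.1 hx).imp
      (sd_le_iff.1 (IsLowerSet.monotone_iff_continuous.2 φ.continuous hvw) x)
      (sd_le_iff.1 (IsLowerSet.monotone_iff_continuous.2 ψ.continuous hvw) x)
  let θ : C(V, X.sd.carrier) := ⟨union, IsLowerSet.monotone_iff_continuous.1 union_mono⟩
  have hθ : EquivariantOn G θ := by
    intro g v h
    refine SetLike.ext fun x => ?_
    change x ∈ union ⟨g • (v : α), h⟩ ↔ x ∈ g • union v
    simp only [mem_union, hφ g v h, hψ g v h, mem_sd_smul, or_and_right, exists_or]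
  have hφθ : GHomotopic G φ θ := homotopicWith_of_specializes
    (fun _ => IsLowerSet.specializes_iff_le.2 fun _ hx => mem_union.2 (.inl hx)) hφ hθ
  have hψθ : GHomotopic G ψ θ := homotopicWith_of_specializes
    (fun _ => IsLowerSet.specializes_iff_le.2 fun _ hx => mem_union.2 (.inr hx)) hψ hθ
  exact hφθ.trans hψθ.symm

end Chains

section SubdivisionOfMaps

/-- The subdivision of a subset `U`, as the set of those chains that lie in `U`. -/
def sdOn (U : Set X.carrier) : Set X.sd.carrier :=
  {c | ∀ x ∈ c, x ∈ U}

variable {U : Set X.carrier}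

theorem isOpen_sdOn (U : Set X.carrier) : IsOpen (sdOn U) :=
  fun _ hd _ hcd x hx => hd x (sd_le_iff.1 hcd x hx)

theorem gInvariant_sdOn (hU : GInvariant G U) : GInvariant G (sdOn U) := by
  intro g c hc x hx
  obtain ⟨y, hy, rfl⟩ := mem_sd_smul.1 hx
  exact hU g y (hc y hy)

theorem iUnion_sdOn {ι : Type*} {U : ι → Set X.carrier} (hopen : ∀ i, IsOpen (U i))
    (hcover : ⋃ i, U i = Set.univ) : ⋃ i, sdOn (U i) = Set.univ := by
  refine Set.eq_univ_of_forall fun c => ?_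
  obtain ⟨m, -, hmax⟩ := exists_mem_forall_le c
  obtain ⟨i, hi⟩ := Set.iUnion_eq_univ_iff.1 hcover m
  exact Set.mem_iUnion.2 ⟨i, fun x hx => hopen i hi (hmax x hx)⟩

/-- The map induced on chains by a monotone map, `{p₀ < ⋯ < pₙ} ↦ {f p₀, …, f pₙ}`. -/
noncomputable def sdMap (f : U →o Y.carrier) : C(sdOn U, Y.sd.carrier) where
  toFun c := chainOf (f '' {u : U | (u : X.carrier) ∈ c.1})
    ((sd_nonempty c.1).elim fun x hx => ⟨_, ⟨x, c.2 x hx⟩, hx, rfl⟩) (by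
      rintro _ ⟨u, hu, rfl⟩ _ ⟨v, hv, rfl⟩
      exact (sd_le_total c.1 hu hv).imp (fun h => f.monotone h) (fun h => f.monotone h))
  continuous_toFun := by
    refine IsLowerSet.monotone_iff_continuous.1 fun c d hcd => sd_le_iff.2 fun y hy => ?_
    obtain ⟨u, hu, rfl⟩ := mem_chainOf.1 hy
    exact mem_chainOf.2 ⟨u, sd_le_iff.1 hcd u hu, rfl⟩

theorem mem_sdMap {f : U →o Y.carrier} {c : sdOn U} {y : Y.carrier} :
    y ∈ sdMap f c ↔ ∃ u : U, (u : X.carrier) ∈ c.1 ∧ f u = y :=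
  (Set.toFinite _).mem_toFinset

theorem equivariantOn_sdMap {f : U →o Y.carrier} (hf : EquivariantOn G f) :
    EquivariantOn G (sdMap f) := by
  intro g c hc
  refine SetLike.ext fun y => ?_
  simp only [mem_sdMap, mem_sd_smul]
  constructor
  · rintro ⟨⟨_, hgx⟩, ⟨x, hx, rfl⟩, rfl⟩
    exact ⟨_, ⟨⟨x, c.2 x hx⟩, hx, rfl⟩, (hf g ⟨x, c.2 x hx⟩ hgx).symm⟩
  · rintro ⟨_, ⟨u, hu, rfl⟩, rfl⟩
    have hgu : g • (u : X.carrier) ∈ g • c.1 := mem_sd_smul.2 ⟨u, hu, rfl⟩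
    exact ⟨⟨_, hc _ hgu⟩, ⟨u, hu, rfl⟩, hf g u _⟩

theorem sdMap_eq_coe {f : U →o X.carrier} (hf : ∀ u, f u = u) (c : sdOn U) : sdMap f c = c := by
  refine SetLike.ext fun x => ?_
  simp only [mem_sdMap, hf]
  exact ⟨fun ⟨_, hu, hux⟩ => hux ▸ hu, fun hx => ⟨⟨x, c.2 x hx⟩, hx, rfl⟩⟩

end SubdivisionOfMaps

section Homotopy

variable {U : Set X.carrier} {f k : U →o Y.carrier}

theorem gHomotopic_sdMap_of_interleaved (hf : EquivariantOn G f) (hk : EquivariantOn G k)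
    (hfk : Interleaved f k) : GHomotopic G (sdMap f) (sdMap k) := by
  refine gHomotopic_of_comparable (equivariantOn_sdMap hf) (equivariantOn_sdMap hk)
    fun c y hy z hz => ?_
  obtain ⟨u, hu, rfl⟩ := mem_sdMap.1 hy
  obtain ⟨v, hv, rfl⟩ := mem_sdMap.1 hz
  rcases sd_le_total c.1 hu hv with huv | hvu
  · exact .inl ((f.monotone huv).trans (hfk.le v))
  · rcases hvu.eq_or_lt with heq | hlt
    · exact .inl (Subtype.ext heq ▸ hfk.le u)
    · exact .inr (hfk.le_of_lt hlt)

theorem gHomotopic_sdMap_of_le (hf : EquivariantOn G f) (hk : EquivariantOn G k) (hfk : f ≤ k) :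
    GHomotopic G (sdMap f) (sdMap k) := by
  let ρ (u : U) : ℕ := lowerRank (u : X.carrier)
  have hρ : StrictMono ρ := fun _ _ h => lowerRank_strictMono (P := X.carrier) h
  have hswitch (n : ℕ) : EquivariantOn G (switchAtRank hρ.monotone hfk n) :=
    .switchAtRank hρ.monotone (fun g u _ => lowerRank_smul g (u : X.carrier)) hfk hf hk n
  have hchain (n : ℕ) : GHomotopic G (sdMap (switchAtRank hρ.monotone hfk n)) (sdMap k) := by
    induction n with
    | zero =>
      rw [switchAtRank_zero]
      exact .refl _ (equivariantOn_sdMap hk)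
    | succ n ih =>
      exact (gHomotopic_sdMap_of_interleaved (hswitch (n + 1)) (hswitch n)
        (interleaved_switchAtRank hρ hfk n)).trans ih
  have hbound (u : U) : ρ u < Nat.card X.carrier + 1 := Nat.lt_succ_of_le (lowerRank_le_card _)
  exact switchAtRank_of_forall_lt hρ.monotone hfk hbound ▸ hchain _

theorem gHomotopic_sdMap_of_continuous {T : Type*} [TopologicalSpace T] [PreconnectedSpace T]
    {F : T → U →o Y.carrier} (hF : ∀ t, EquivariantOn G (F t))
    (hcont : ∀ u, Continuous fun t => F t u) (s t : T) :
    GHomotopic G (sdMap (F s)) (sdMap (F t)) := by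
  let R (s t : T) : Prop := GHomotopic G (sdMap (F s)) (sdMap (F t))
  have : Std.Symm R := ⟨fun _ _ h => h.symm⟩
  have : IsTrans T R := ⟨fun _ _ _ h₁ h₂ => h₁.trans h₂⟩
  refine PreconnectedSpace.induction₂ R (fun t => ?_) this s t
  have hle : ∀ᶠ s in 𝓝 t, F s ≤ F t := Filter.eventually_all.2 fun u =>
    (hcont u).continuousAt.eventually <| by
      rw [IsLowerSet.nhds_eq_principal_Iic]
      exact Filter.mem_principal_self _
  filter_upwards [hle] with s hs
  exact (gHomotopic_sdMap_of_le (hF s) (hF t) hs).symm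

theorem exists_orbit_sdMap {x₀ : Y.carrier} (hf : ∀ u, f u ∈ MulAction.orbit G x₀) :
    ∃ v₀ : Y.sd.carrier, ∀ c, sdMap f c ∈ MulAction.orbit G v₀ := by
  refine ⟨chainOf {x₀} (Set.singleton_nonempty x₀) (by simp), fun c => ?_⟩
  have horbit : ∀ y ∈ sdMap f c, y ∈ MulAction.orbit G x₀ := by
    intro y hy
    obtain ⟨u, -, rfl⟩ := mem_sdMap.1 hy
    exact hf u
  obtain ⟨y, hy⟩ := sd_nonempty (sdMap f c)
  obtain ⟨g, rfl⟩ := horbit y hy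
  have hsingle : ∀ z ∈ sdMap f c, z = g • x₀ := fun z hz =>
    (sd_le_total _ hz hy).elim ((isAntichain_orbit G x₀).eq (horbit z hz) (horbit _ hy))
      ((isAntichain_orbit G x₀).eq' (horbit z hz) (horbit _ hy))
  refine ⟨g, SetLike.ext fun z => ?_⟩
  simp only [mem_sd_smul, mem_chainOf, Set.mem_singleton_iff, exists_eq_left]
  exact ⟨fun h => h ▸ hy, fun hz => (hsingle z hz).symm⟩

end Homotopy

theorem gCategorical_sdOn {U : Set X.carrier} (hU : GCategorical G X.carrier U) :
    GCategorical G X.sd.carrier (sdOn U) := by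
  obtain ⟨x₀, F, hF, hF_zero, hF_smul, hF_one⟩ := hU
  let f (t : unitInterval) : U →o X.carrier :=
    ⟨fun u => F (u, t), IsLowerSet.monotone_iff_continuous.2 (by fun_prop)⟩
  obtain ⟨v₀, hv₀⟩ := exists_orbit_sdMap (f := f 1) hF_one
  obtain ⟨H⟩ : GHomotopic G (sdMap (f 0)) (sdMap (f 1)) :=
    gHomotopic_sdMap_of_continuous (fun t g u h => hF_smul g u h t)
      (fun u => show Continuous fun t => F (u, t) by fun_prop) 0 1
  refine ⟨v₀, H ∘ Prod.swap, H.continuous.comp continuous_swap, fun c => ?_,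
    fun g c h t => H.prop t g c h, fun c => ?_⟩
  · exact (H.apply_zero c).trans (sdMap_eq_coe hF_zero c)
  · exact Set.mem_of_eq_of_mem (H.apply_one c) (hv₀ c)

end FinGPoset

theorem LSG_sd_le_general (G : Type) [Group G] (X : FinGPoset G) : X.sd.LSG ≤ X.LSG := by
  refine le_sInf ?_
  rintro _ ⟨n, rfl, U, hopen, hinv, hcover, hcat⟩
  exact sInf_le ⟨n, rfl, fun i => FinGPoset.sdOn (U i), fun i => FinGPoset.isOpen_sdOn (U i),
    fun i => FinGPoset.gInvariant_sdOn (hinv i), FinGPoset.iUnion_sdOn hopen hcover,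
    fun i => FinGPoset.gCategorical_sdOn (hcat i)⟩

/-- Let `G` be a finite group and `X` a finite `T₀` `G`-space. Then
`LS_G(sd(X)) ≤ LS_G(X)`: the equivariant Lusternik–Schnirelmann category does not increase
under barycentric subdivision. -/
theorem LSG_sd_le (G : Type) [Group G] [Finite G] (X : FinGPoset G) :
    X.sd.LSG ≤ X.LSG :=
  LSG_sd_le_general G X
end

section
/- Let G be a finite group and X a finite T0 G-space. Then the equivariant Lusternik–Schnirelmann category of sd^n(X) is finite for every n ≥ 2: LS_G(sd^n(X)) < ∞. -/
/-!
A point of `sd Z` is a chain of `Z`. Suppose that the stabilizer of a point of `Z` fixes everything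
below that point, and let `s` be the least element of a chain `c`. Then on the invariant open set
`G · U_c`, with `U_c` the minimal neighbourhood of `c`, the assignment `d ↦ g • s` for `d ≤ g • c`
does not depend on the choice of `g`: two choices differ by an element that moves some point of `c`
to a comparable one, hence fixes that point, hence fixes `s`. The fence
`d ≤ d ∪ {g • s} ≥ {g • s}` is therefore an equivariant homotopy into the orbit of `{s}`, and
`G · U_c` is categorical. Finally, the assumption on stabilizers holds whenever `Z` is itself a
subdivision, because an element that preserves a chain fixes it pointwise.
-/

open Topology Pointwise
open MulAction (orbit stabilizer)

section Fence

variable {A P : Type*}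

/-- The homotopy given by a three-step fence `i ≤ f ≥ r` of maps into a finite space: it is `i` on
`[0, 1/2)`, `f` at `1/2` and `r` on `(1/2, 1]`. -/
noncomputable def fenceHomotopy (i f r : A → P) (p : A × unitInterval) : P :=
  if (p.2 : ℝ) < 1 / 2 then i p.1 else if 1 / 2 < (p.2 : ℝ) then r p.1 else f p.1

theorem fenceHomotopy_zero (i f r : A → P) (a : A) : fenceHomotopy i f r (a, 0) = i a := by
  simp [fenceHomotopy]

theorem fenceHomotopy_one (i f r : A → P) (a : A) : fenceHomotopy i f r (a, 1) = r a := by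
  norm_num [fenceHomotopy]

variable [TopologicalSpace A] [Preorder P] [TopologicalSpace P] [Topology.IsLowerSet P]

theorem continuous_fenceHomotopy {i f r : A → P} (hi : Continuous i) (hf : Continuous f)
    (hr : Continuous r) (hif : i ≤ f) (hrf : r ≤ f) : Continuous (fenceHomotopy i f r) := by
  rw [continuous_def]
  intro V hV
  have hV_lower : IsLowerSet V := IsLowerSet.isOpen_iff_isLowerSet.1 hV
  have hpre : fenceHomotopy i f r ⁻¹' V =
      (i ⁻¹' V) ×ˢ {t : unitInterval | (t : ℝ) < 1 / 2} ∪
        (r ⁻¹' V) ×ˢ {t : unitInterval | 1 / 2 < (t : ℝ)} ∪ (f ⁻¹' V) ×ˢ Set.univ := by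
    ext ⟨a, t⟩
    have hia : f a ∈ V → i a ∈ V := hV_lower (hif a)
    have hra : f a ∈ V → r a ∈ V := hV_lower (hrf a)
    rcases lt_trichotomy (t : ℝ) (1 / 2) with ht | ht | ht
    · simpa [fenceHomotopy, ht, ht.not_gt, -one_div] using hia
    · simp [fenceHomotopy, ht]
    · simpa [fenceHomotopy, ht, ht.not_gt, -one_div] using hra
  rw [hpre]
  exact (((hV.preimage hi).prod (isOpen_lt continuous_subtype_val continuous_const)).union
    ((hV.preimage hr).prod (isOpen_lt continuous_const continuous_subtype_val))).union
    ((hV.preimage hf).prod isOpen_univ)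

instance isLowerSet_subtype (U : Set P) : Topology.IsLowerSet U := by
  rw [Topology.isLowerSet_iff_nhds]
  intro u
  rw [nhds_subtype, IsLowerSet.nhds_eq_principal_Iic, Filter.comap_principal]
  rfl

theorem gCategorical_of_fence {G : Type*} [Group G] [MulAction G P] {U : Set P} {x₀ : P}
    {f r : U → P} (hf : Monotone f) (hr : Monotone r) (hif : (↑) ≤ f) (hrf : r ≤ f)
    (hf_smul : ∀ (g : G) (u : U) (h : g • (u : P) ∈ U), f ⟨g • (u : P), h⟩ = g • f u)
    (hr_smul : ∀ (g : G) (u : U) (h : g • (u : P) ∈ U), r ⟨g • (u : P), h⟩ = g • r u)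
    (hr_orbit : ∀ u, r u ∈ orbit G x₀) : GCategorical G P U := by
  refine ⟨x₀, fenceHomotopy (↑) f r, ?_, fenceHomotopy_zero _ f r, ?_, ?_⟩
  · exact continuous_fenceHomotopy continuous_subtype_val
      (IsLowerSet.monotone_iff_continuous.1 hf) (IsLowerSet.monotone_iff_continuous.1 hr) hif hrf
  · intro g u h t
    simp only [fenceHomotopy, hf_smul, hr_smul, apply_ite (g • ·)]
  · intro u
    rw [fenceHomotopy_one]
    exact hr_orbit u

end Fence

theorem eqLS_le_card {G X ι : Type*} [Group G] [TopologicalSpace X] [MulAction G X] [Fintype ι]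
    {U : ι → Set X} (hopen : ∀ i, IsOpen (U i)) (hinv : ∀ i, GInvariant G (U i))
    (hcover : ⋃ i, U i = Set.univ) (hcat : ∀ i, GCategorical G X (U i)) :
    eqLS G X ≤ Fintype.card ι := by
  let e := (Fintype.equivFin ι).symm
  refine sInf_le ⟨_, rfl, fun k => U (e k), fun k => hopen _, fun k => hinv _, ?_, fun k => hcat _⟩
  rw [e.surjective.iUnion_comp U, hcover]

section OrderedAction

variable {G P : Type*} [Group G] [MulAction G P]

section Preorder

variable [Preorder P]

variable (G) in
/-- The saturation `G · U_x` of the minimal open neighbourhood `U_x = Set.Iic x` of a point `x` of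
a finite `G`-space. -/
def orbitNhd (x : P) : Set P := {y | ∃ g : G, y ≤ g • x}

theorem isLowerSet_orbitNhd (x : P) : IsLowerSet (orbitNhd G x) :=
  fun _ _ hzy ⟨g, hyx⟩ => ⟨g, hzy.trans hyx⟩

theorem mem_orbitNhd_self (x : P) : x ∈ orbitNhd G x :=
  ⟨1, (one_smul G x).ge⟩

theorem gInvariant_orbitNhd [CovariantClass G P (· • ·) (· ≤ ·)] (x : P) :
    GInvariant G (orbitNhd G x) :=
  fun g _ ⟨h, hyx⟩ => ⟨g * h, (smul_mono_right g hyx).trans_eq (smul_smul g h x)⟩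

theorem eqLS_lt_top_of_gCategorical_orbitNhd [Finite P] [TopologicalSpace P]
    [Topology.IsLowerSet P] [CovariantClass G P (· • ·) (· ≤ ·)]
    (hcat : ∀ x : P, GCategorical G P (orbitNhd G x)) : eqLS G P < ⊤ := by
  have := Fintype.ofFinite P
  refine (eqLS_le_card (fun x : P => ?_) gInvariant_orbitNhd ?_ hcat).trans_lt
    (ENat.natCast_lt_top _)
  · exact IsLowerSet.isOpen_iff_isLowerSet.2 (isLowerSet_orbitNhd x)
  · exact Set.iUnion_eq_univ_iff.2 fun x => ⟨x, mem_orbitNhd_self x⟩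

end Preorder

variable [PartialOrder P] [Finite P] [CovariantClass G P (· • ·) (· ≤ ·)] {g : G} {x : P}

theorem smul_eq_self_of_le_smul (h : x ≤ g • x) : g • x = x := by
  obtain ⟨n, hn, hperiod⟩ := (MulAction.injective g).mem_periodicPts x
  have hpow : g ^ n • x = x := by
    rwa [Function.IsPeriodicPt, Function.IsFixedPt, smul_iterate_apply] at hperiod
  refine le_antisymm ?_ h
  calc g • x ≤ g • g ^ (n - 1) • x := smul_mono_right g (le_pow_smul h (n - 1))
    _ = x := by rw [smul_smul, mul_pow_sub_one hn.ne', hpow]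

theorem smul_eq_self_of_comparable (h : x ≤ g • x ∨ g • x ≤ x) : g • x = x := by
  rcases h with h | h
  · exact smul_eq_self_of_le_smul h
  · have h_inv : x ≤ g⁻¹ • x := by simpa using smul_mono_right g⁻¹ h
    exact (inv_smul_eq_iff.1 (smul_eq_self_of_le_smul h_inv)).symm

end OrderedAction

theorem exists_isLeast_of_isChain {P : Type*} [Preorder P] {s : Set P} (hs : IsChain (· ≤ ·) s)
    (hfin : s.Finite) (hne : s.Nonempty) : ∃ x, IsLeast s x := by
  obtain ⟨x, hx⟩ := hfin.exists_minimal hne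
  exact ⟨x, hx.1, fun y hy => (hs.total hx.1 hy).elim id (hx.2 hy)⟩

namespace FinGPoset

variable {G : Type} [Group G] {X : FinGPoset G}

instance (X : FinGPoset G) : TopologicalSpace X.carrier := downTop X.carrier

instance (X : FinGPoset G) : Topology.IsLowerSet X.carrier where
  topology_eq_lowerSetTopology := TopologicalSpace.ext <| by
    ext U
    exact ⟨fun hU _ _ hba ha => hU ha hba, fun hU _ ha _ hba => hU hba ha⟩

instance (X : FinGPoset G) : MulAction G X.carrier := X.mulAction

instance (X : FinGPoset G) : CovariantClass G X.carrier (· • ·) (· ≤ ·) where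
  elim := X.smul_mono

namespace sd

/-- A point of the subdivision, regarded as the set of elements of the chain. -/
instance : SetLike X.sd.carrier X.carrier where
  coe c := (Subtype.val c : Finset X.carrier)
  coe_injective := Finset.coe_injective.comp Subtype.val_injective

instance : IsConcreteLE X.sd.carrier X.carrier where
  coe_subset_coe' := Iff.rfl

theorem nonempty (c : X.sd.carrier) : (c : Set X.carrier).Nonempty := c.2.1

theorem isChain (c : X.sd.carrier) : IsChain (· ≤ ·) (c : Set X.carrier) :=
  fun x hx y hy _ => c.2.2 x hx y hy

theorem coe_smul (g : G) (c : X.sd.carrier) :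
    ((g • c : X.sd.carrier) : Set X.carrier) = g • (c : Set X.carrier) := by
  classical exact Finset.coe_image

theorem mem_smul_iff_inv_smul_mem {g : G} {c : X.sd.carrier} {x : X.carrier} :
    x ∈ g • c ↔ g⁻¹ • x ∈ c := by
  rw [← SetLike.mem_coe, coe_smul, Set.mem_smul_set_iff_inv_smul_mem, SetLike.mem_coe]

/-- The point of the subdivision given by a nonempty chain, presented as a set. -/
noncomputable def ofIsChain (s : Set X.carrier) (hne : s.Nonempty) (hs : IsChain (· ≤ ·) s) :
    X.sd.carrier :=
  ⟨s.toFinite.toFinset, by simpa using hne,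
    fun x hx y hy => hs.total (by simpa using hx) (by simpa using hy)⟩

theorem coe_ofIsChain (s : Set X.carrier) (hne : s.Nonempty) (hs : IsChain (· ≤ ·) s) :
    (ofIsChain s hne hs : Set X.carrier) = s :=
  s.toFinite.coe_toFinset

theorem smul_eq_self_of_mem {g : G} {c : X.sd.carrier} {x : X.carrier} (hx : x ∈ c)
    (hgx : g • x ∈ c) : g • x = x :=
  smul_eq_self_of_comparable ((isChain c).total hx hgx)

theorem mem_stabilizer_iff {g : G} {c : X.sd.carrier} :
    g ∈ stabilizer G c ↔ ∀ x ∈ c, g • x = x := by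
  rw [MulAction.mem_stabilizer_iff, ← SetLike.coe_set_eq, coe_smul]
  refine ⟨fun h x hx => smul_eq_self_of_mem hx ?_, fun h => ?_⟩
  · rw [← SetLike.mem_coe, ← h]
    exact Set.smul_mem_smul_set hx
  · exact (Set.image_congr h).trans (Set.image_id' _)

theorem antitone_stabilizer (X : FinGPoset G) :
    Antitone (stabilizer G : X.sd.carrier → Subgroup G) :=
  fun _ _ hcd _ hg => mem_stabilizer_iff.2 fun x hx => mem_stabilizer_iff.1 hg x (hcd hx)

theorem gCategorical_of_isChain_insert {U : Set X.sd.carrier} {s : X.carrier} {r : U → X.carrier}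
    (hr_orbit : ∀ u, r u ∈ orbit G s) (hr_le : ∀ u v, u ≤ v → r u = r v)
    (hr_smul : ∀ (g : G) (u : U) (h : g • (u : X.sd.carrier) ∈ U), r ⟨g • u, h⟩ = g • r u)
    (hr_chain : ∀ u : U, IsChain (· ≤ ·) (insert (r u) (u : Set X.carrier))) :
    GCategorical G X.sd.carrier U := by
  let point (x : X.carrier) : X.sd.carrier :=
    ofIsChain {x} (Set.singleton_nonempty x) Set.subsingleton_singleton.isChain
  let cone (u : U) : X.sd.carrier := ofIsChain _ (Set.insert_nonempty _ _) (hr_chain u)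
  have coe_point (x) : (point x : Set X.carrier) = {x} := coe_ofIsChain _ _ _
  have coe_cone (u) : (cone u : Set X.carrier) = insert (r u) (u : Set X.carrier) :=
    coe_ofIsChain _ _ _
  have point_smul (g : G) (x : X.carrier) : point (g • x) = g • point x := by
    rw [← SetLike.coe_set_eq, coe_smul, coe_point, coe_point, Set.smul_set_singleton]
  refine gCategorical_of_fence (x₀ := point s) (f := cone) (r := fun u => point (r u))
    ?_ ?_ ?_ ?_ ?_ ?_ ?_
  · intro u v huv
    rw [← SetLike.coe_subset_coe, coe_cone, coe_cone, hr_le u v huv]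
    exact Set.insert_subset_insert (SetLike.coe_subset_coe.2 huv)
  · exact fun u v huv => (congrArg point (hr_le u v huv)).le
  · intro u
    rw [← SetLike.coe_subset_coe, coe_cone]
    exact Set.subset_insert _ _
  · intro u
    rw [← SetLike.coe_subset_coe, coe_cone, coe_point, Set.singleton_subset_iff]
    exact Set.mem_insert _ _
  · intro g u h
    rw [← SetLike.coe_set_eq, coe_smul, coe_cone, coe_cone, hr_smul, coe_smul, Set.smul_set_insert]
  · intro g u h
    rw [hr_smul, point_smul]
  · intro u
    obtain ⟨g, hg⟩ := hr_orbit u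
    exact ⟨g, by rw [← hg, point_smul]⟩

section Translate

variable (hX : Antitone (stabilizer G : X.carrier → Subgroup G)) {c : X.sd.carrier} {s : X.carrier}
  (hs : IsLeast (c : Set X.carrier) s)

include hX hs

theorem smul_eq_smul_of_le_smul {d : X.sd.carrier} {g h : G} (hg : d ≤ g • c) (hh : d ≤ h • c) :
    g • s = h • s := by
  obtain ⟨t, ht⟩ := nonempty d
  have hgt : g⁻¹ • t ∈ c := mem_smul_iff_inv_smul_mem.1 (hg ht)
  have hht : h⁻¹ • t ∈ c := mem_smul_iff_inv_smul_mem.1 (hh ht)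
  have hfix : (h⁻¹ * g) • g⁻¹ • t = g⁻¹ • t :=
    smul_eq_self_of_mem hgt (by rwa [mul_smul, smul_inv_smul])
  have hfix_s : (h⁻¹ * g) • s = s := hX (hs.2 hgt) hfix
  rwa [mul_smul, inv_smul_eq_iff] at hfix_s

theorem exists_forall_le_smul_imp_eq_smul :
    ∃ r : orbitNhd G c → X.carrier, ∀ (u : orbitNhd G c) (g : G), u.1 ≤ g • c → r u = g • s := by
  choose γ hγ using fun u : orbitNhd G c => u.2
  exact ⟨fun u => γ u • s, fun u g hg => smul_eq_smul_of_le_smul hX hs (hγ u) hg⟩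

end Translate

theorem gCategorical_orbitNhd
    (hX : Antitone (stabilizer G : X.carrier → Subgroup G)) (c : X.sd.carrier) :
    GCategorical G X.sd.carrier (orbitNhd G c) := by
  obtain ⟨s, hs⟩ := exists_isLeast_of_isChain (isChain c) (Set.toFinite _) (nonempty c)
  obtain ⟨r, hr⟩ := exists_forall_le_smul_imp_eq_smul hX hs
  refine gCategorical_of_isChain_insert (s := s) (r := r) ?_ ?_ ?_ ?_
  · intro u
    obtain ⟨g, hg⟩ := u.2
    exact ⟨g, (hr u g hg).symm⟩
  · intro u v huv
    obtain ⟨g, hg⟩ := v.2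
    rw [hr v g hg, hr u g (le_trans huv hg)]
  · intro g u h
    obtain ⟨k, hk⟩ := u.2
    rw [hr u k hk, ← mul_smul]
    exact hr _ _ (by rw [mul_smul]; exact smul_mono_right g hk)
  · intro u
    obtain ⟨g, hg⟩ := u.2
    refine (isChain (g • c)).mono (Set.insert_subset ?_ (SetLike.coe_subset_coe.2 hg))
    rw [hr u g hg, coe_smul]
    exact Set.smul_mem_smul_set hs.1

end sd

theorem LSG_sd_lt_top (hX : Antitone (stabilizer G : X.carrier → Subgroup G)) : X.sd.LSG < ⊤ :=
  eqLS_lt_top_of_gCategorical_orbitNhd (sd.gCategorical_orbitNhd hX)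

end FinGPoset

theorem LSG_sdIter_lt_top_general (G : Type) [Group G] (X : FinGPoset G) (n : ℕ) (hn : 2 ≤ n) :
    (FinGPoset.sdIter n X).LSG < ⊤ := by
  obtain ⟨m, rfl⟩ := Nat.exists_eq_add_of_le' hn
  exact FinGPoset.LSG_sd_lt_top (FinGPoset.sd.antitone_stabilizer (FinGPoset.sdIter m X))

/-- Let `G` be a finite group and `X` a finite `T₀` `G`-space. Then the
equivariant Lusternik–Schnirelmann category of `sd^n(X)` is finite for every `n ≥ 2`. -/
theorem LSG_sdIter_lt_top (G : Type) [Group G] [Finite G] (X : FinGPoset G)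
    (n : ℕ) (hn : 2 ≤ n) :
    (FinGPoset.sdIter n X).LSG < ⊤ :=
  LSG_sdIter_lt_top_general G X n hn
end

section
/- Let G be a finite group, X a finite T0 G-space, and N = (#X)^{#((X×X)/G)}, where #((X×X)/G) is the number of G-orbits of X×X under the diagonal action. Then CC_G(X) = CC_{G,N}(X): the equivariant combinatorial complexity is realized by combinatorial paths of length N. -/
/-!
Exchanging the two variables turns a section of `q_m` over an invariant set `U` into a
combinatorial path of length `m`, from the first to the second projection, in the space of
continuous equivariant maps `U → X`. An equivariant map is determined by its values at
representatives of the orbits, so this space has at most `N` points. In a finite space the set of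
points reachable from `a` by combinatorial paths of length `k` arises by applying closures and
open hulls alternately to `{a}`; both operators are idempotent, so once two consecutive sets (of
index at least one) agree the sequence is constant. Before that each step adds a point, hence
paths of length `N` reach everything that can be reached.
-/

open Set Topology

section ZigzagPaths

variable {E : Type*} [TopologicalSpace E]

/-- The condition for `x` and `y` to be the values at `k` and `k + 1` of a combinatorial path: in
Mathlib's convention for the specialization relation, `i < j` in the zigzag order forces the value
at `i` to specialize to the value at `j`. -/
def ZigzagStep (k : ℕ) (x y : E) : Prop :=
  if Even k then x ⤳ y else y ⤳ x

theorem zigzagStep_iff_of_even {k : ℕ} (hk : Even k) {x y : E} : ZigzagStep k x y ↔ x ⤳ y := by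
  rw [ZigzagStep, if_pos hk]

theorem zigzagStep_iff_of_not_even {k : ℕ} (hk : ¬ Even k) {x y : E} :
    ZigzagStep k x y ↔ y ⤳ x := by
  rw [ZigzagStep, if_neg hk]

theorem ZigzagStep.refl (k : ℕ) (x : E) : ZigzagStep k x x := by
  unfold ZigzagStep
  split_ifs <;> exact specializes_rfl

theorem J.continuous_iff_forall_specializes {m : ℕ} {f : J m → E} :
    Continuous f ↔ ∀ i j : J m, zigzagLE i.val j.val → f i ⤳ f j := by
  constructor
  · intro hf i j hij
    exact specializes_iff_forall_open.2 fun V hV hj ↦ hV.preimage hf hj hij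
  · intro hf
    exact ⟨fun V hV j hj i hij ↦ (hf i j hij).mem_open hV hj⟩

theorem J.continuous_iff_forall_zigzagStep {m : ℕ} {f : J m → E} :
    Continuous f ↔ ∀ i : Fin m, ZigzagStep i (f i.castSucc) (f i.succ) := by
  rw [J.continuous_iff_forall_specializes]
  constructor
  · intro hf i
    by_cases hi : Even (i : ℕ)
    · exact (zigzagStep_iff_of_even hi).2
        (hf i.castSucc i.succ (.inr ⟨Nat.even_iff.1 hi, .inl rfl⟩))
    · have hsucc : ((i : ℕ) + 1) % 2 = 0 := Nat.even_iff.1 (Nat.even_add_one.2 hi)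
      exact (zigzagStep_iff_of_not_even hi).2
        (hf i.succ i.castSucc (.inr ⟨hsucc, .inr rfl⟩))
  · rintro hf ⟨i, hi⟩ ⟨j, hj⟩ (h | ⟨heven, h | h⟩)
    · obtain rfl : i = j := h
      exact specializes_rfl
    · obtain rfl : j = i + 1 := h
      exact (zigzagStep_iff_of_even (Nat.even_iff.2 heven)).1 (hf ⟨i, by omega⟩)
    · obtain rfl : i = j + 1 := h
      have hodd : ¬ Even j := Nat.even_add_one.1 (Nat.even_iff.2 heven)
      exact (zigzagStep_iff_of_not_even hodd).1 (hf ⟨j, by omega⟩)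

/-- The set of endpoints of combinatorial paths of length `m` that start at `a`. -/
def zigzagReach (m : ℕ) (a : E) : Set E :=
  {b | ∃ γ : C(J m, E), γ (J.zero m) = a ∧ γ (J.last m) = b}

theorem zigzagReach_zero (a : E) : zigzagReach 0 a = {a} := by
  ext b
  constructor
  · rintro ⟨γ, rfl, rfl⟩
    rfl
  · rintro rfl
    exact ⟨.const _ b, rfl, rfl⟩

theorem mem_zigzagReach_succ {m : ℕ} {a b : E} :
    b ∈ zigzagReach (m + 1) a ↔ ∃ x ∈ zigzagReach m a, ZigzagStep m x b := by
  constructor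
  · rintro ⟨γ, rfl, rfl⟩
    obtain ⟨hinit, hlast⟩ :=
      Fin.forall_fin_succ'.1 (J.continuous_iff_forall_zigzagStep.1 γ.continuous)
    let γ' : C(J m, E) := ⟨fun i ↦ γ (Fin.castSucc i), J.continuous_iff_forall_zigzagStep.2 hinit⟩
    exact ⟨γ' (J.last m), ⟨γ', rfl, rfl⟩, hlast⟩
  · rintro ⟨-, ⟨γ, rfl, rfl⟩, hstep⟩
    let f : Fin (m + 2) → E := Fin.snoc (α := fun _ ↦ E) γ b
    have hinit (i : Fin (m + 1)) : f i.castSucc = γ i := Fin.snoc_castSucc (α := fun _ ↦ E) b γ i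
    have hlast : f (Fin.last (m + 1)) = b := Fin.snoc_last (α := fun _ ↦ E) b γ
    have hf : ∀ i : Fin (m + 1), ZigzagStep i (f i.castSucc) (f i.succ) := by
      refine Fin.forall_fin_succ'.2 ⟨fun i ↦ ?_, ?_⟩
      · rw [Fin.succ_castSucc, hinit, hinit]
        exact J.continuous_iff_forall_zigzagStep.1 γ.continuous i
      · rw [Fin.succ_last, hinit, hlast]
        exact hstep
    exact ⟨⟨f, J.continuous_iff_forall_zigzagStep.2 hf⟩, hinit 0, hlast⟩

theorem zigzagReach_mono (a : E) : Monotone fun m ↦ zigzagReach m a :=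
  monotone_nat_of_le_succ fun m x hx ↦ mem_zigzagReach_succ.2 ⟨x, hx, .refl m x⟩

theorem mem_closure_iff_exists_specializes [AlexandrovDiscrete E] {S : Set E} {y : E} :
    y ∈ closure S ↔ ∃ x ∈ S, x ⤳ y := by
  calc
    y ∈ closure S ↔ y ∈ closure (⋃ x ∈ S, {x}) := by rw [biUnion_of_singleton]
    _ ↔ ∃ x ∈ S, x ⤳ y := by
      simp only [closure_iUnion, mem_iUnion, exists_prop, specializes_iff_mem_closure]

theorem zigzagReach_succ_of_even [AlexandrovDiscrete E] {m : ℕ} (hm : Even m) (a : E) :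
    zigzagReach (m + 1) a = closure (zigzagReach m a) := by
  ext b
  simp only [mem_zigzagReach_succ, mem_closure_iff_exists_specializes,
    zigzagStep_iff_of_even hm]

theorem zigzagReach_succ_of_not_even [AlexandrovDiscrete E] {m : ℕ} (hm : ¬ Even m) (a : E) :
    zigzagReach (m + 1) a = nhdsKer (zigzagReach m a) := by
  ext b
  simp only [mem_zigzagReach_succ, mem_nhdsKer_iff_specializes, zigzagStep_iff_of_not_even hm]

theorem zigzagReach_stable_succ [AlexandrovDiscrete E] {m : ℕ} {a : E}
    (h : zigzagReach (m + 1) a = zigzagReach (m + 2) a) :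
    zigzagReach (m + 2) a = zigzagReach (m + 3) a := by
  by_cases hm : Even m
  · have hm₂ : Even (m + 2) := by grind
    rw [zigzagReach_succ_of_even hm₂, ← h, zigzagReach_succ_of_even hm, closure_closure]
  · have hm₂ : ¬ Even (m + 2) := by grind
    rw [zigzagReach_succ_of_not_even hm₂, ← h, zigzagReach_succ_of_not_even hm, nhdsKer_nhdsKer]

theorem zigzagReach_eq_of_card_le [Finite E] (a : E) {n : ℕ} (hn : Nat.card E ≤ n) :
    zigzagReach n a = zigzagReach (Nat.card E) a := by
  -- Discarding `a` starts the count at zero, so that the sequence settles after `#E - 1` steps.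
  let f (k : ℕ) : ℕ := (zigzagReach (k + 1) a \ {a}).ncard
  have hmem (k : ℕ) : a ∈ zigzagReach k a :=
    zigzagReach_mono a k.zero_le ((zigzagReach_zero a).ge rfl)
  have hmono : Monotone f := fun k l hkl ↦
    ncard_le_ncard (sdiff_subset_sdiff_left (zigzagReach_mono a (Nat.succ_le_succ hkl)))
  have heq {k l : ℕ} (hkl : k ≤ l) (h : f k = f l) :
      zigzagReach (k + 1) a = zigzagReach (l + 1) a := by
    refine eq_of_subset_of_ncard_le (zigzagReach_mono a (Nat.succ_le_succ hkl)) ?_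
    rw [← ncard_sdiff_singleton_add_one (hmem (k + 1)),
      ← ncard_sdiff_singleton_add_one (hmem (l + 1))]
    exact Nat.succ_le_succ h.ge
  have hbound (k : ℕ) : f k ≤ Nat.card E - 1 := by
    have hle := ncard_le_card (zigzagReach (k + 1) a)
    rw [← ncard_sdiff_singleton_add_one (hmem (k + 1))] at hle
    exact Nat.le_sub_one_of_lt hle
  have hstable (k : ℕ) (h : f k = f (k + 1)) : f (k + 1) = f (k + 2) := by
    simp only [f, zigzagReach_stable_succ (heq k.le_succ h)]
  have hpos : 0 < Nat.card E := Nat.card_pos_iff.2 ⟨⟨a⟩, inferInstance⟩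
  have hlast := heq (by omega)
    (Nat.stabilises_of_monotone hmono hbound hstable (Nat.sub_le_sub_right hn 1)).symm
  rw [Nat.sub_add_cancel hpos, Nat.sub_add_cancel (hpos.trans_le hn)] at hlast
  exact hlast.symm

theorem zigzagReach_subset_of_card_le [Finite E] (a : E) (m : ℕ) {n : ℕ} (hn : Nat.card E ≤ n) :
    zigzagReach m a ⊆ zigzagReach n a := by
  rw [zigzagReach_eq_of_card_le a hn,
    ← zigzagReach_eq_of_card_le a (le_max_right m (Nat.card E))]
  exact zigzagReach_mono a (le_max_left m _)

end ZigzagPaths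

section EquivariantMaps

/-- The continuous equivariant maps `U → X`. As a subspace of the product `U → X` it carries the
topology of pointwise convergence. -/
def equivariantMaps (G : Type*) {Y : Type*} [SMul G Y] [TopologicalSpace Y] (U : Set Y)
    (X : Type*) [SMul G X] [TopologicalSpace X] : Set (U → X) :=
  {f | Continuous f ∧ ∀ (g : G) (u : U) (h : g • (u : Y) ∈ U), f ⟨g • (u : Y), h⟩ = g • f u}

theorem card_equivariantMaps_le {G : Type*} [Group G] {Y X : Type*} [MulAction G Y]
    [MulAction G X] [TopologicalSpace Y] [TopologicalSpace X] [Finite X]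
    [Finite (MulAction.orbitRel.Quotient G Y)] [Nonempty (Y → X)] {U : Set Y}
    (hU : GInvariant G U) :
    Nat.card (equivariantMaps G U X) ≤
      Nat.card X ^ Nat.card (MulAction.orbitRel.Quotient G Y) := by
  classical
  let fallback : Y → X := Classical.arbitrary _
  let valuesOnOrbits (f : equivariantMaps G U X) (q : MulAction.orbitRel.Quotient G Y) : X :=
    if hq : q.out ∈ U then f.1 ⟨q.out, hq⟩ else fallback q.out
  rw [← Nat.card_fun]
  refine Nat.card_le_card_of_injective valuesOnOrbits fun f f' hff' ↦ ?_
  ext u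
  let q : MulAction.orbitRel.Quotient G Y := ⟦(u : Y)⟧
  obtain ⟨g, hg⟩ : ∃ g : G, g • (u : Y) = q.out :=
    MulAction.orbitRel_apply.1 (Quotient.mk_out (s := MulAction.orbitRel G Y) (u : Y))
  have hgu : g • (u : Y) ∈ U := hU g u u.2
  have hrep : f.1 ⟨g • (u : Y), hgu⟩ = f'.1 ⟨g • (u : Y), hgu⟩ := by
    have := congrFun hff' q
    simpa only [valuesOnOrbits, ← hg, dif_pos hgu] using this
  rw [f.2.2, f'.2.2] at hrep
  exact MulAction.injective g hrep

end EquivariantMaps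

theorem continuous_continuousMap_iff_forall_apply {Z A X : Type*} [TopologicalSpace Z]
    [TopologicalSpace A] [Finite A] [TopologicalSpace X] {s : Z → C(A, X)} :
    Continuous s ↔ ∀ t, Continuous fun z ↦ s z t := by
  refine ⟨fun hs t ↦ (continuous_eval_const t).comp hs, fun hs ↦ ?_⟩
  refine ContinuousMap.continuous_compactOpen.2 fun K _ V hV ↦ ?_
  have : {z | MapsTo (s z) K V} = ⋂ t ∈ K, (fun z ↦ s z t) ⁻¹' V := by
    ext z
    simp [MapsTo]
  rw [this]
  exact K.toFinite.isOpen_biInter fun t _ ↦ hV.preimage (hs t)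

instance (m : ℕ) : Finite (J m) :=
  inferInstanceAs (Finite (Fin (m + 1)))

section Navigability

variable {G : Type*} [Group G] {X : Type*} [TopologicalSpace X] [MulAction G X]

theorem fst_mem_equivariantMaps (U : Set (X × X)) :
    (fun u : U ↦ (u : X × X).1) ∈ equivariantMaps G U X :=
  ⟨by fun_prop, fun _ _ _ ↦ rfl⟩

theorem snd_mem_equivariantMaps (U : Set (X × X)) :
    (fun u : U ↦ (u : X × X).2) ∈ equivariantMaps G U X :=
  ⟨by fun_prop, fun _ _ _ ↦ rfl⟩

theorem eqNavigableJ_iff_mem_zigzagReach {m : ℕ} {U : Set (X × X)} :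
    EqNavigableJ G X m U ↔
      (⟨_, snd_mem_equivariantMaps U⟩ : equivariantMaps G U X) ∈
        zigzagReach m ⟨_, fst_mem_equivariantMaps U⟩ := by
  constructor
  · rintro ⟨s, hs, hends, hequiv⟩
    have hs := continuous_continuousMap_iff_forall_apply.1 hs
    refine ⟨⟨fun t ↦ ⟨fun u ↦ s u t, hs t, fun g u h ↦ hequiv g u h t⟩, ?_⟩, ?_, ?_⟩
    · exact Continuous.subtype_mk (continuous_pi fun u ↦ (s u).continuous) _
    · exact Subtype.ext (funext fun u ↦ (hends u).1)
    · exact Subtype.ext (funext fun u ↦ (hends u).2)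
  · rintro ⟨γ, hzero, hlast⟩
    have hγ (u : U) : Continuous fun t ↦ (γ t).1 u :=
      (continuous_apply u).comp (continuous_subtype_val.comp γ.continuous)
    refine ⟨fun u ↦ ⟨fun t ↦ (γ t).1 u, hγ u⟩, ?_, fun u ↦ ⟨?_, ?_⟩, ?_⟩
    · exact continuous_continuousMap_iff_forall_apply.2 fun t ↦ (γ t).2.1
    · exact congrFun (congrArg Subtype.val hzero) u
    · exact congrFun (congrArg Subtype.val hlast) u
    · exact fun g u h t ↦ (γ t).2.2 g u h

theorem EqNavigableJ.of_card_le [Finite X] {m n : ℕ} {U : Set (X × X)} (hU : GInvariant G U)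
    (hn : Nat.card X ^ Nat.card (MulAction.orbitRel.Quotient G (X × X)) ≤ n)
    (h : EqNavigableJ G X m U) : EqNavigableJ G X n U := by
  have : Nonempty (X × X → X) := ⟨Prod.fst⟩
  rw [eqNavigableJ_iff_mem_zigzagReach] at h ⊢
  exact zigzagReach_subset_of_card_le _ m ((card_equivariantMaps_le hU).trans hn) h

variable (G X)

theorem eqCCm_le_eqCCm_of_card_le [Finite X] (m : ℕ) {n : ℕ}
    (hn : Nat.card X ^ Nat.card (MulAction.orbitRel.Quotient G (X × X)) ≤ n) :
    eqCCm G X n ≤ eqCCm G X m := by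
  refine sInf_le_sInf ?_
  rintro k ⟨l, rfl, U, hopen, hinv, hcover, hnav⟩
  exact ⟨l, rfl, U, hopen, hinv, hcover, fun i ↦ (hnav i).of_card_le (hinv i) hn⟩

theorem eqCC_eq_eqCCm_card_general [Finite X] {n : ℕ}
    (hn : Nat.card X ^ Nat.card (MulAction.orbitRel.Quotient G (X × X)) ≤ n) :
    eqCC G X = eqCCm G X n := by
  have hpos : 0 < Nat.card X ^ Nat.card (MulAction.orbitRel.Quotient G (X × X)) := by
    have : Nonempty (MulAction.orbitRel.Quotient G (X × X) → X) := ⟨fun q ↦ q.out.1⟩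
    rw [← Nat.card_fun]
    exact Nat.card_pos
  apply le_antisymm
  · obtain ⟨k, rfl⟩ := Nat.exists_eq_succ_of_ne_zero (hpos.trans_le hn).ne'
    exact iInf_le _ k
  · exact le_iInf fun m ↦ eqCCm_le_eqCCm_of_card_le G X (m + 1) hn

end Navigability

/-- For a finite `T₀` `G`-space `X`, letting
`N = (#X)^(#((X×X)/G))` (the cardinality of `X` raised to the number of `G`-orbits of
`X × X` under the diagonal action), the equivariant combinatorial complexity is realized by
combinatorial paths of length `N`: `CC_G(X) = CC_{G,N}(X)`. -/
theorem eqCC_eq_eqCCm_card (G X : Type*) [Group G] [Finite G]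
    [TopologicalSpace X] [Finite X] [T0Space X]
    [MulAction G X] [ContinuousConstSMul G X] :
    eqCC G X =
      eqCCm G X (Nat.card X ^ Nat.card (Quotient (MulAction.orbitRel G (X × X)))) :=
  eqCC_eq_eqCCm_card_general G X le_rfl
end
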